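/- arXiv:1507.07831 — 2 statements merged into one kernel-verified Lean document; each statement's English description precedes it below -/
import Mathlib

section
/- Let d ≥ 2, let D ⊂ ℝ^d be a bounded open set, and set v(x) = -∫_D ∇N(x-y) dy. Let x ∉ ∂D and ε = dist(x, ∂D) > 0. Then v is differentiable at x and its partial derivatives satisfy: for 1 ≤ j,k ≤ d with j ≠ k, ∂v^j/∂x_k(x) = (d/ω_{d-1}) ∫_{D∖B(x,ε)} (x_j-y_j)(x_k-y_k)/|x-y|^{d+2} dy; and for 1 ≤ j ≤ d, ∂v^j/∂x_j(x) = -(1/d) χ_D(x) - (1/ω_{d-1}) ∫_{D∖B(x,ε)} (|x-y|² - d(x_j-y_j)²)/|x-y|^{d+2} dy. -/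
open MeasureTheory Metric Set
open scoped RealInnerProductSpace

noncomputable def sphereVol (d : ℕ) : ℝ :=
  d * (volume (Metric.ball (0 : EuclideanSpace ℝ (Fin d)) 1)).toReal

noncomputable def gradN (d : ℕ) (y : EuclideanSpace ℝ (Fin d)) : EuclideanSpace ℝ (Fin d) :=
  (sphereVol d * ‖y‖ ^ d)⁻¹ • y

noncomputable def hessN (d : ℕ) (z w : EuclideanSpace ℝ (Fin d)) : EuclideanSpace ℝ (Fin d) :=
  (sphereVol d)⁻¹ • ((‖z‖ ^ d)⁻¹ • w - ((d : ℝ) * (‖z‖ ^ (d + 2))⁻¹ * ⟪z, w⟫) • z)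

/-- `Φ` is a defining function of class `C^{1+γ}` for the set `D`. -/
def IsDefining (d : ℕ) (γ : ℝ) (D : Set (EuclideanSpace ℝ (Fin d)))
    (Φ : EuclideanSpace ℝ (Fin d) → ℝ) : Prop :=
  ContDiff ℝ 1 Φ ∧
  (∃ K : ℝ, ∀ x y, ‖gradient Φ x - gradient Φ y‖ ≤ K * ‖x - y‖ ^ γ) ∧
  D = {x | Φ x < 0} ∧
  frontier D = {x | Φ x = 0} ∧
  ∀ x ∈ frontier D, gradient Φ x ≠ 0

/-- `D` is a bounded domain of class `C^{1+γ}`. -/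
def IsC1Domain (d : ℕ) (γ : ℝ) (D : Set (EuclideanSpace ℝ (Fin d))) : Prop :=
  IsOpen D ∧ Bornology.IsBounded D ∧ ∃ Φ, IsDefining d γ D Φ

/-!
The singular kernel `gradN` is replaced by the capped kernel `cappedGradN`, which is linear in the
ball of radius `δ` and equal to `gradN` outside it. Both kernels are odd, hence integrate to zero
over balls centred at the origin. For `δ < ε` and `z` near `x`, the ball `ball z δ` lies in `D` or
misses it, so the two kernels have the same convolution with the indicator of `D` near `x`. The
capped kernel is Lipschitz, hence differentiable almost everywhere by Rademacher's theorem, and its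
convolution may be differentiated under the integral: the ball contributes the volume of the
`δ`-ball times the slope of the linear piece, which is `1 / d` for every `δ`, and the rest of `D`
contributes the integral of `hessN`. The derivative does not depend on `δ`, so `δ` may increase to
`ε`.
-/

open Filter Topology

section Topology

lemma subset_or_disjoint_of_disjoint_frontier {X : Type*} [TopologicalSpace X] {s t : Set X}
    (hs : IsPreconnected s) (hst : Disjoint s (frontier t)) : s ⊆ t ∨ Disjoint s t := by
  have hcover : s ⊆ interior t ∪ (closure t)ᶜ := fun y hy => by
    by_contra! h
    exact hst.notMem_of_mem_left hy ⟨not_not.1 fun hc => h (Or.inr hc), fun hi => h (Or.inl hi)⟩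
  have hdisj : Disjoint (interior t) (closure t)ᶜ :=
    disjoint_compl_right.mono_left interior_subset_closure
  refine (hs.subset_or_subset isOpen_interior isClosed_closure.isOpen_compl hdisj hcover).imp
    (fun h => h.trans interior_subset) fun h => ?_
  exact (disjoint_compl_left.mono_left h).mono_right subset_closure

lemma ball_subset_or_disjoint_of_le_infDist_frontier {E : Type*} [NormedAddCommGroup E]
    [NormedSpace ℝ E] {t : Set E} {x : E} {r : ℝ} (hr : r ≤ infDist x (frontier t)) :
    ball x r ⊆ t ∨ Disjoint (ball x r) t :=
  subset_or_disjoint_of_disjoint_frontier isPreconnected_ball <|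
    disjoint_ball_infDist.mono_left (ball_subset_ball hr)

end Topology

section Integral

variable {E F : Type*} [NormedAddCommGroup E] [MeasurableSpace E] [BorelSpace E]
  [NormedAddCommGroup F] [NormedSpace ℝ F]

lemma setIntegral_ball_comp_sub_eq_zero {μ : Measure E} [μ.IsAddLeftInvariant]
    [μ.IsNegInvariant] {f : E → F} (hf : f.Odd) (z : E) (r : ℝ) :
    ∫ y in ball z r, f (z - y) ∂μ = 0 := by
  have hodd : ((ball 0 r).indicator f).Odd := fun u => by
    by_cases hu : u ∈ ball 0 r <;> simp_all [hf u]
  have hball : ∀ y, (ball z r).indicator (fun y => f (z - y)) y = (ball 0 r).indicator f (z - y) :=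
    fun y => by simp only [indicator, mem_ball', dist_eq_norm, zero_sub, norm_neg]
  have hneg : ∫ u, (ball 0 r).indicator f u ∂μ = -∫ u, (ball 0 r).indicator f u ∂μ := by
    rw [← integral_neg, ← integral_neg_eq_self]
    exact integral_congr_ae (.of_forall hodd)
  rw [← integral_indicator measurableSet_ball]
  simp only [hball, integral_sub_left_eq_self]
  have : IsAddTorsionFree F := .of_isTorsionFree ℝ F
  exact self_eq_neg.1 hneg

lemma tendsto_setIntegral_sdiff_ball {μ : Measure E} {f : E → F} {s : Set E}
    (hs : MeasurableSet s) {c : E} {r : ℕ → ℝ} {R : ℝ} (hr : Monotone r) (hrR : ∀ n, r n < R)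
    (hlim : Tendsto r atTop (𝓝 R)) (hf : IntegrableOn f (s \ ball c (r 0)) μ) :
    Tendsto (fun n => ∫ y in s \ ball c (r n), f y ∂μ) atTop (𝓝 (∫ y in s \ ball c R, f y ∂μ)) := by
  have hunion : ⋃ n, ball c (r n) = ball c R := by
    refine (iUnion_subset fun n => ball_subset_ball (hrR n).le).antisymm fun y hy => ?_
    obtain ⟨n, hn⟩ := (hlim.eventually_const_lt hy).exists
    exact mem_iUnion.2 ⟨n, hn⟩
  rw [← hunion, sdiff_iUnion]
  exact tendsto_setIntegral_of_antitone (fun n => hs.diff measurableSet_ball)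
    (fun m n hmn => sdiff_subset_sdiff_right (ball_subset_ball (hr hmn))) ⟨0, hf⟩

variable [NormedSpace ℝ E] [FiniteDimensional ℝ E]

lemma ae_norm_sub_ne (μ : Measure E) [μ.IsAddHaarMeasure] (x : E) {r : ℝ} (hr : r ≠ 0) :
    ∀ᵐ y ∂μ, ‖x - y‖ ≠ r := by
  filter_upwards [measure_eq_zero_iff_ae_notMem.1 (Measure.addHaar_sphere_of_ne_zero μ x hr)]
    with y hy hyr
  exact hy (by rwa [mem_sphere', dist_eq_norm])

variable [FiniteDimensional ℝ F]

lemma hasFDerivAt_setIntegral_comp_sub_of_lipschitzWith {μ : Measure E} [μ.IsAddHaarMeasure]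
    {C : NNReal} {f : E → F} (hf : LipschitzWith C f) {s : Set E} (hs : μ s ≠ ⊤) {x : E}
    (hint : IntegrableOn (fun y => f (x - y)) s μ) :
    IntegrableOn (fun y => fderiv ℝ f (x - y)) s μ ∧
      HasFDerivAt (fun z => ∫ y in s, f (z - y) ∂μ) (∫ y in s, fderiv ℝ f (x - y) ∂μ) x := by
  borelize F
  have hdiff : ∀ᵐ y ∂μ.restrict s, DifferentiableAt ℝ f (x - y) := ae_restrict_of_ae <|
    (quasiMeasurePreserving_sub_left_of_right_invariant μ x).ae hf.ae_differentiableAt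
  have hcont : ∀ z, Continuous fun y => f (z - y) := fun z =>
    hf.continuous.comp (continuous_const.sub continuous_id)
  refine hasFDerivAt_integral_of_dominated_loc_of_lip' (bound := fun _ => (C : ℝ)) univ_mem
    (fun z _ => (hcont z).aestronglyMeasurable) hint
    ((measurable_fderiv ℝ f).comp (measurable_const.sub measurable_id)).aestronglyMeasurable
    (.of_forall fun y z _ => ?_) (integrableOn_const hs) ?_
  · simpa using hf.norm_sub_le (z - y) (x - y)
  · filter_upwards [hdiff] with y hy
    exact hy.hasFDerivAt.comp x ((hasFDerivAt_id x).sub_const y)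

end Integral

section Norm

lemma hasFDerivAt_norm_of_ne_zero {E : Type*} [NormedAddCommGroup E] [InnerProductSpace ℝ E]
    {u : E} (hu : u ≠ 0) : HasFDerivAt norm (‖u‖⁻¹ • innerSL ℝ u) u := by
  have hsqrt := (hasStrictFDerivAt_norm_sq u).hasFDerivAt.sqrt (by positivity)
  simp only [Real.sqrt_sq (norm_nonneg _)] at hsqrt
  convert! hsqrt using 1
  ext w
  simp only [_root_.smul_apply, smul_eq_mul, nsmul_eq_mul, Nat.cast_ofNat]
  field_simp

lemma mul_inv_pow_sub_inv_pow_le {a b : ℝ} (ha : 0 < a) (hab : a ≤ b) (n : ℕ) :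
    a * ((a ^ n)⁻¹ - (b ^ n)⁻¹) ≤ n * (a ^ n)⁻¹ * (b - a) := by
  have hb : 0 < b := ha.trans_le hab
  have hbernoulli : 1 + n * (a / b - 1) ≤ (a / b) ^ n :=
    one_add_mul_sub_le_pow (by linarith [div_pos ha hb]) n
  calc a * ((a ^ n)⁻¹ - (b ^ n)⁻¹) = (a ^ n)⁻¹ * (a * (1 - (a / b) ^ n)) := by
        rw [div_pow]; field_simp
    _ ≤ (a ^ n)⁻¹ * (a * (n * (1 - a / b))) := by
        gcongr
        linarith only [hbernoulli]
    _ = n * (a ^ n)⁻¹ * (a / b * (b - a)) := by field_simp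
    _ ≤ n * (a ^ n)⁻¹ * (1 * (b - a)) := by
        have := sub_nonneg.2 hab
        gcongr
        exact (div_le_one hb).2 hab
    _ = n * (a ^ n)⁻¹ * (b - a) := by rw [one_mul]

lemma norm_inv_max_pow_smul_sub_le {E : Type*} [NormedAddCommGroup E] [NormedSpace ℝ E] {δ : ℝ}
    (hδ : 0 < δ) (n : ℕ) (u v : E) :
    ‖(max ‖u‖ δ ^ n)⁻¹ • u - (max ‖v‖ δ ^ n)⁻¹ • v‖ ≤ (n + 1) * (δ ^ n)⁻¹ * ‖u - v‖ := by
  wlog huv : ‖u‖ ≤ ‖v‖ generalizing u v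
  · rw [norm_sub_rev, norm_sub_rev u v]
    exact this v u (le_of_not_ge huv)
  set a := max ‖u‖ δ
  set b := max ‖v‖ δ
  have hδa : δ ≤ a := le_max_right _ _
  have hδb : δ ≤ b := le_max_right _ _
  have ha : 0 < a := hδ.trans_le hδa
  have hab : a ≤ b := max_le_max_right _ huv
  have hba : b - a ≤ ‖u - v‖ := calc
    b - a ≤ |b - a| := le_abs_self _
    _ ≤ |‖v‖ - ‖u‖| := abs_max_sub_max_le_abs _ _ _
    _ ≤ ‖u - v‖ := norm_sub_rev u v ▸ abs_norm_sub_norm_le v u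
  have hinv : 0 ≤ (a ^ n)⁻¹ - (b ^ n)⁻¹ := sub_nonneg.2 (by gcongr)
  calc ‖(a ^ n)⁻¹ • u - (b ^ n)⁻¹ • v‖
      = ‖((a ^ n)⁻¹ - (b ^ n)⁻¹) • u + (b ^ n)⁻¹ • (u - v)‖ := by
        congr 1; module
    _ ≤ ((a ^ n)⁻¹ - (b ^ n)⁻¹) * ‖u‖ + (b ^ n)⁻¹ * ‖u - v‖ := by
        refine (norm_add_le _ _).trans_eq ?_
        rw [norm_smul, norm_smul, Real.norm_of_nonneg hinv, Real.norm_of_nonneg (by positivity)]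
    _ ≤ a * ((a ^ n)⁻¹ - (b ^ n)⁻¹) + (b ^ n)⁻¹ * ‖u - v‖ := by
        rw [mul_comm a]; gcongr; exact le_max_left _ _
    _ ≤ n * (a ^ n)⁻¹ * (b - a) + (b ^ n)⁻¹ * ‖u - v‖ := by
        grw [mul_inv_pow_sub_inv_pow_le ha hab n]
    _ ≤ n * (δ ^ n)⁻¹ * ‖u - v‖ + (δ ^ n)⁻¹ * ‖u - v‖ := by gcongr
    _ = (n + 1) * (δ ^ n)⁻¹ * ‖u - v‖ := by ring

end Norm

section Kernel

variable {d : ℕ}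

lemma sphereVol_pos [NeZero d] : 0 < sphereVol d :=
  mul_pos (Nat.cast_pos.2 (NeZero.pos d)) <|
    ENNReal.toReal_pos (measure_ball_pos _ _ one_pos).ne' measure_ball_lt_top.ne

lemma volume_real_ball_eq_sphereVol [NeZero d] (x : EuclideanSpace ℝ (Fin d)) {r : ℝ}
    (hr : 0 < r) : volume.real (ball x r) = (d : ℝ)⁻¹ * (sphereVol d * r ^ d) := by
  have hd : (d : ℝ) ≠ 0 := Nat.cast_ne_zero.2 (NeZero.ne d)
  rw [Measure.real, Measure.addHaar_ball_of_pos _ _ hr, ENNReal.toReal_mul,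
    ENNReal.toReal_ofReal (by positivity), finrank_euclideanSpace_fin, sphereVol]
  field_simp

/-- The kernel `gradN` with the factor `‖u‖ ^ d` in the denominator replaced by `δ ^ d` inside the
ball of radius `δ`: a Lipschitz kernel, linear in that ball and equal to `gradN` outside it. -/
noncomputable def cappedGradN (d : ℕ) (δ : ℝ) (u : EuclideanSpace ℝ (Fin d)) :
    EuclideanSpace ℝ (Fin d) :=
  (sphereVol d * max ‖u‖ δ ^ d)⁻¹ • u

variable {δ : ℝ} {u : EuclideanSpace ℝ (Fin d)}

lemma cappedGradN_of_norm_le (hu : ‖u‖ ≤ δ) :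
    cappedGradN d δ u = (sphereVol d * δ ^ d)⁻¹ • u := by
  rw [cappedGradN, max_eq_right hu]

lemma cappedGradN_of_le_norm (hu : δ ≤ ‖u‖) : cappedGradN d δ u = gradN d u := by
  rw [cappedGradN, gradN, max_eq_left hu]

lemma gradN_odd : (gradN d).Odd := fun u => by simp [gradN]

lemma cappedGradN_odd : (cappedGradN d δ).Odd := fun u => by simp [cappedGradN]

lemma exists_lipschitzWith_cappedGradN (hδ : 0 < δ) : ∃ C, LipschitzWith C (cappedGradN d δ) := by
  refine ⟨_, LipschitzWith.of_dist_le' (K := |(sphereVol d)⁻¹| * ((d + 1) * (δ ^ d)⁻¹))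
    fun u v => ?_⟩
  simp only [dist_eq_norm, cappedGradN, mul_inv, mul_smul, ← smul_sub, norm_smul, Real.norm_eq_abs]
  rw [mul_assoc]
  gcongr
  exact norm_inv_max_pow_smul_sub_le hδ d u v

lemma norm_gradN_le [NeZero d] (u : EuclideanSpace ℝ (Fin d)) :
    ‖gradN d u‖ ≤ (sphereVol d)⁻¹ * (‖u‖ ^ (d - 1))⁻¹ := by
  have hω := sphereVol_pos (d := d)
  rcases eq_or_ne u 0 with rfl | hu
  · simp only [gradN, smul_zero, norm_zero]
    positivity
  · rw [gradN, norm_smul, Real.norm_of_nonneg (by positivity), ← mul_pow_sub_one (NeZero.ne d) ‖u‖]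
    field_simp
    rfl

lemma norm_cappedGradN_le [NeZero d] (hδ : 0 < δ) (u : EuclideanSpace ℝ (Fin d)) :
    ‖cappedGradN d δ u‖ ≤ (sphereVol d)⁻¹ * (δ ^ (d - 1))⁻¹ := by
  have hω := sphereVol_pos (d := d)
  rcases le_total δ ‖u‖ with hu | hu
  · rw [cappedGradN_of_le_norm hu]
    refine (norm_gradN_le u).trans ?_
    gcongr
  · rw [cappedGradN_of_norm_le hu, norm_smul, Real.norm_of_nonneg (by positivity),
      ← mul_pow_sub_one (NeZero.ne d) δ]
    calc (sphereVol d * (δ * δ ^ (d - 1)))⁻¹ * ‖u‖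
        ≤ (sphereVol d * (δ * δ ^ (d - 1)))⁻¹ * δ := by gcongr
      _ = (sphereVol d)⁻¹ * (δ ^ (d - 1))⁻¹ := by field_simp

lemma locallyIntegrable_gradN [NeZero d] : LocallyIntegrable (gradN d) := by
  have hpos := NeZero.pos d
  refine locallyIntegrable_of_norm_le_rpow (C := (sphereVol d)⁻¹) (α := (d - 1 : ℕ)) ?_ ?_
    (.of_forall fun u => ?_) ?_
  · simpa using Nat.succ_le_of_lt hpos
  · simpa using hpos
  · simpa only [Real.rpow_neg (norm_nonneg u), Real.rpow_natCast] using norm_gradN_le u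
  · unfold gradN
    exact Measurable.aestronglyMeasurable (by fun_prop)

lemma integrableOn_gradN_sub_ball [NeZero d] (z : EuclideanSpace ℝ (Fin d)) (r : ℝ) :
    IntegrableOn (fun y => gradN d (z - y)) (ball z r) := by
  have hball : (fun y => z - y) ⁻¹' ball 0 r = ball z r := by
    ext y
    rw [mem_preimage, mem_ball_zero_iff, mem_ball_iff_norm']
  rw [← hball]
  refine ((Measure.measurePreserving_sub_left volume z).integrableOn_comp_preimage
    (f := gradN d) (MeasurableEquiv.subLeft z).measurableEmbedding).2 ?_
  exact (locallyIntegrable_gradN.integrableOn_isCompact (isCompact_closedBall 0 r)).mono_set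
    ball_subset_closedBall

lemma integrableOn_cappedGradN_sub [NeZero d] (hδ : 0 < δ) {D : Set (EuclideanSpace ℝ (Fin d))}
    (hD : volume D ≠ ⊤) (z : EuclideanSpace ℝ (Fin d)) :
    IntegrableOn (fun y => cappedGradN d δ (z - y)) D := by
  obtain ⟨_, hlip⟩ := exists_lipschitzWith_cappedGradN (d := d) hδ
  exact Measure.integrableOn_of_bounded hD
    (hlip.continuous.comp (continuous_const.sub continuous_id)).aestronglyMeasurable
    (.of_forall fun y => norm_cappedGradN_le hδ (z - y))

lemma fderiv_gradN_apply (hu : u ≠ 0) (w : EuclideanSpace ℝ (Fin d)) :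
    fderiv ℝ (gradN d) u w = hessN d u w := by
  have hu0 : ‖u‖ ≠ 0 := norm_ne_zero_iff.2 hu
  have hgradN : gradN d = fun v => (sphereVol d)⁻¹ • (‖v‖ ^ d)⁻¹ • v := by
    funext v
    rw [gradN, mul_inv, mul_smul]
  have hinv := (hasDerivAt_inv (pow_ne_zero d hu0)).comp_hasFDerivAt u
    ((hasFDerivAt_norm_of_ne_zero hu).pow d)
  have hderiv := (hinv.smul (hasFDerivAt_id u)).const_smul (sphereVol d)⁻¹
  rw [hgradN]
  refine (DFunLike.congr_fun hderiv.fderiv w).trans ?_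
  rcases d with _ | n
  · simp [hessN]
  · simp only [hessN, Function.comp_apply, add_tsub_cancel_right, add_apply, _root_.smul_apply,
      ContinuousLinearMap.smulRight_apply, innerSL_apply_apply, ContinuousLinearMap.id_apply, id_eq,
      nsmul_eq_mul, smul_eq_mul]
    rw [sub_eq_add_neg, ← neg_smul]
    congr 3
    field_simp
    ring

lemma fderiv_cappedGradN_of_norm_lt (hu : ‖u‖ < δ) :
    fderiv ℝ (cappedGradN d δ) u =
      (sphereVol d * δ ^ d)⁻¹ • ContinuousLinearMap.id ℝ (EuclideanSpace ℝ (Fin d)) := by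
  have hloc : cappedGradN d δ =ᶠ[𝓝 u] fun v => (sphereVol d * δ ^ d)⁻¹ • v := by
    filter_upwards [continuous_norm.tendsto u |>.eventually_lt_const hu] with v hv
    exact cappedGradN_of_norm_le hv.le
  rw [hloc.fderiv_eq]
  exact ((hasFDerivAt_id (𝕜 := ℝ) u).const_smul (sphereVol d * δ ^ d)⁻¹).fderiv

lemma fderiv_cappedGradN_of_lt_norm (hδ : 0 ≤ δ) (hu : δ < ‖u‖)
    (w : EuclideanSpace ℝ (Fin d)) : fderiv ℝ (cappedGradN d δ) u w = hessN d u w := by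
  have hloc : cappedGradN d δ =ᶠ[𝓝 u] gradN d := by
    filter_upwards [continuous_norm.tendsto u |>.eventually_const_lt hu] with v hv
    exact cappedGradN_of_le_norm hv.le
  rw [hloc.fderiv_eq, fderiv_gradN_apply (norm_pos_iff.1 (hδ.trans_lt hu))]

lemma ae_fderiv_cappedGradN_sub_eq_hessN (hδ : 0 < δ) (x w : EuclideanSpace ℝ (Fin d)) :
    ∀ᵐ y, y ∉ ball x δ → fderiv ℝ (cappedGradN d δ) (x - y) w = hessN d (x - y) w := by
  filter_upwards [ae_norm_sub_ne volume x hδ.ne'] with y hne hy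
  have hle : δ ≤ ‖x - y‖ := not_lt.1 fun h => hy (mem_ball_iff_norm'.2 h)
  exact fderiv_cappedGradN_of_lt_norm hδ.le (hle.lt_of_ne' hne) w

lemma hessN_single_apply (z : EuclideanSpace ℝ (Fin d)) (j k : Fin d) :
    hessN d z (EuclideanSpace.single k 1) j =
      (sphereVol d)⁻¹ * (((if j = k then ‖z‖ ^ 2 else 0) - d * (z j * z k)) / ‖z‖ ^ (d + 2)) := by
  have hpow : (‖z‖ ^ d)⁻¹ = ‖z‖ ^ 2 / ‖z‖ ^ (d + 2) := by
    rcases eq_or_ne z 0 with rfl | hz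
    · simp [j.pos.ne']
    · field_simp
      ring
  simp only [hessN, hpow, EuclideanSpace.inner_single_right, conj_trivial, one_mul,
    PiLp.smul_apply, PiLp.sub_apply, PiLp.single_apply, smul_eq_mul]
  split_ifs <;> ring

end Kernel

section Field

variable {d : ℕ} [NeZero d] {D : Set (EuclideanSpace ℝ (Fin d))} {δ : ℝ}
  {x : EuclideanSpace ℝ (Fin d)}

lemma setIntegral_gradN_sub_eq_cappedGradN (hδ : 0 < δ) (hD : MeasurableSet D)
    (hDfin : volume D ≠ ⊤) {z : EuclideanSpace ℝ (Fin d)}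
    (hz : ball z δ ⊆ D ∨ Disjoint (ball z δ) D) :
    ∫ y in D, gradN d (z - y) = ∫ y in D, cappedGradN d δ (z - y) := by
  have hoff : EqOn (fun y => gradN d (z - y)) (fun y => cappedGradN d δ (z - y)) (D \ ball z δ) :=
    fun y hy => (cappedGradN_of_le_norm <| not_lt.1 fun h => hy.2 (mem_ball_iff_norm'.2 h)).symm
  have hcapped := integrableOn_cappedGradN_sub hδ hDfin z
  have hgradN : IntegrableOn (fun y => gradN d (z - y)) D := by
    have hfar : IntegrableOn (fun y => gradN d (z - y)) (D \ ball z δ) :=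
      (hcapped.mono_set sdiff_subset).congr_fun hoff.symm (hD.diff measurableSet_ball)
    exact ((integrableOn_gradN_sub_ball z δ).union hfar).mono_set (by simp)
  have hnear :
      ∫ y in D ∩ ball z δ, gradN d (z - y) = ∫ y in D ∩ ball z δ, cappedGradN d δ (z - y) := by
    rcases hz with hsub | hdisj
    · rw [inter_eq_right.2 hsub, setIntegral_ball_comp_sub_eq_zero gradN_odd,
        setIntegral_ball_comp_sub_eq_zero cappedGradN_odd]
    · rw [hdisj.symm.inter_eq, setIntegral_empty, setIntegral_empty]
  rw [← integral_inter_add_sdiff measurableSet_ball hgradN,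
    ← integral_inter_add_sdiff measurableSet_ball hcapped, hnear,
    setIntegral_congr_fun (hD.diff measurableSet_ball) hoff]

lemma setIntegral_inter_ball_fderiv_cappedGradN (hδ : 0 < δ)
    (hx : ball x δ ⊆ D ∨ Disjoint (ball x δ) D) :
    ∫ y in D ∩ ball x δ, fderiv ℝ (cappedGradN d δ) (x - y) =
      ((d : ℝ)⁻¹ * D.indicator 1 x) • ContinuousLinearMap.id ℝ (EuclideanSpace ℝ (Fin d)) := by
  rcases hx with hsub | hdisj
  · have hvol : sphereVol d * δ ^ d ≠ 0 := by
      have := sphereVol_pos (d := d)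
      positivity
    rw [inter_eq_right.2 hsub, indicator_of_mem (hsub (mem_ball_self hδ)),
      setIntegral_congr_fun measurableSet_ball fun y hy =>
        fderiv_cappedGradN_of_norm_lt (mem_ball_iff_norm'.1 hy),
      setIntegral_const, volume_real_ball_eq_sphereVol x hδ, smul_smul, mul_assoc,
      mul_inv_cancel₀ hvol]
    rfl
  · rw [hdisj.symm.inter_eq, setIntegral_empty,
      indicator_of_notMem (hdisj.notMem_of_mem_left (mem_ball_self hδ)), mul_zero]
    module

theorem hasFDerivAt_setIntegral_gradN_sub (hδ : 0 < δ) (hD : MeasurableSet D)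
    (hDfin : volume D ≠ ⊤) (hδx : δ < infDist x (frontier D)) :
    HasFDerivAt (fun z => ∫ y in D, gradN d (z - y))
      (∫ y in D, fderiv ℝ (cappedGradN d δ) (x - y)) x := by
  obtain ⟨_, hlip⟩ := exists_lipschitzWith_cappedGradN (d := d) hδ
  have hball : ∀ᶠ z in 𝓝 x, ball z δ ⊆ D ∨ Disjoint (ball z δ) D := by
    filter_upwards [((continuous_infDist_pt _).tendsto x).eventually_const_lt hδx] with z hz
    exact ball_subset_or_disjoint_of_le_infDist_frontier hz.le
  refine (hasFDerivAt_setIntegral_comp_sub_of_lipschitzWith hlip hDfin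
    (integrableOn_cappedGradN_sub hδ hDfin x)).2.congr_of_eventuallyEq ?_
  filter_upwards [hball] with z hz
  exact setIntegral_gradN_sub_eq_cappedGradN hδ hD hDfin hz

lemma integrableOn_fderiv_cappedGradN_sub (hδ : 0 < δ) (hDfin : volume D ≠ ⊤)
    (x : EuclideanSpace ℝ (Fin d)) :
    IntegrableOn (fun y => fderiv ℝ (cappedGradN d δ) (x - y)) D := by
  obtain ⟨_, hlip⟩ := exists_lipschitzWith_cappedGradN (d := d) hδ
  exact (hasFDerivAt_setIntegral_comp_sub_of_lipschitzWith hlip hDfin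
    (integrableOn_cappedGradN_sub hδ hDfin x)).1

lemma integrableOn_hessN_sub (hδ : 0 < δ) (hD : MeasurableSet D) (hDfin : volume D ≠ ⊤)
    (x w : EuclideanSpace ℝ (Fin d)) :
    IntegrableOn (fun y => hessN d (x - y) w) (D \ ball x δ) := by
  refine (((integrableOn_fderiv_cappedGradN_sub hδ hDfin x).mono_set
    sdiff_subset).apply_continuousLinearMap w).congr ?_
  filter_upwards [ae_restrict_of_ae (ae_fderiv_cappedGradN_sub_eq_hessN hδ x w),
    ae_restrict_mem (hD.diff measurableSet_ball)] with y hy hmem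
  exact hy hmem.2

lemma setIntegral_fderiv_cappedGradN_apply (hδ : 0 < δ) (hD : MeasurableSet D)
    (hDfin : volume D ≠ ⊤) (hx : ball x δ ⊆ D ∨ Disjoint (ball x δ) D)
    (w : EuclideanSpace ℝ (Fin d)) :
    (∫ y in D, fderiv ℝ (cappedGradN d δ) (x - y)) w =
      ((d : ℝ)⁻¹ * D.indicator 1 x) • w + ∫ y in D \ ball x δ, hessN d (x - y) w := by
  have hint := integrableOn_fderiv_cappedGradN_sub hδ hDfin x
  rw [← integral_inter_add_sdiff measurableSet_ball hint,
    setIntegral_inter_ball_fderiv_cappedGradN hδ hx, add_apply,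
    ContinuousLinearMap.integral_apply (hint.mono_set sdiff_subset),
    setIntegral_congr_ae (hD.diff measurableSet_ball)
      ((ae_fderiv_cappedGradN_sub_eq_hessN hδ x w).mono fun y hy hmem => hy hmem.2)]
  rfl

theorem exists_hasFDerivAt_setIntegral_gradN_sub (hD : MeasurableSet D) (hDfin : volume D ≠ ⊤)
    (hε : 0 < infDist x (frontier D)) :
    ∃ L : EuclideanSpace ℝ (Fin d) →L[ℝ] EuclideanSpace ℝ (Fin d),
      HasFDerivAt (fun z => ∫ y in D, gradN d (z - y)) L x ∧
      ∀ w, L w = ((d : ℝ)⁻¹ * D.indicator 1 x) • w +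
        ∫ y in D \ ball x (infDist x (frontier D)), hessN d (x - y) w := by
  obtain ⟨r, hr, hmem, hlim⟩ := exists_seq_strictMono_tendsto' hε
  have hderiv := fun n => hasFDerivAt_setIntegral_gradN_sub (hmem n).1 hD hDfin (hmem n).2
  refine ⟨_, hderiv 0, fun w => ?_⟩
  have hconst : ∀ n, (∫ y in D, fderiv ℝ (cappedGradN d (r 0)) (x - y)) w =
      ((d : ℝ)⁻¹ * D.indicator 1 x) • w + ∫ y in D \ ball x (r n), hessN d (x - y) w := fun n => by
    rw [(hderiv 0).unique (hderiv n), setIntegral_fderiv_cappedGradN_apply (hmem n).1 hD hDfin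
      (ball_subset_or_disjoint_of_le_infDist_frontier (hmem n).2.le)]
  have htend := (tendsto_setIntegral_sdiff_ball hD hr.monotone (fun n => (hmem n).2) hlim
    (integrableOn_hessN_sub (hmem 0).1 hD hDfin x w)).const_add (((d : ℝ)⁻¹ * D.indicator 1 x) • w)
  exact tendsto_nhds_unique (tendsto_const_nhds.congr hconst) htend

end Field

theorem patch_velocity_gradient_formulas_general {d : ℕ} [NeZero d]
    {D : Set (EuclideanSpace ℝ (Fin d))} (hD : MeasurableSet D) (hDfin : volume D ≠ ⊤)
    {x : EuclideanSpace ℝ (Fin d)} (hε : 0 < infDist x (frontier D)) :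
    ∃ L : EuclideanSpace ℝ (Fin d) →L[ℝ] EuclideanSpace ℝ (Fin d),
      HasFDerivAt (fun z => -(∫ y in D, gradN d (z - y))) L x ∧
      (∀ j k : Fin d, j ≠ k →
        L (EuclideanSpace.single k 1) j =
          ((d : ℝ) / sphereVol d) *
            ∫ y in D \ ball x (infDist x (frontier D)),
              (x j - y j) * (x k - y k) / ‖x - y‖ ^ (d + 2)) ∧
      (∀ j : Fin d,
        L (EuclideanSpace.single j 1) j =
          -(1 / (d : ℝ)) * D.indicator (fun _ => (1 : ℝ)) x -
            (1 / sphereVol d) *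
              ∫ y in D \ ball x (infDist x (frontier D)),
                (‖x - y‖ ^ 2 - (d : ℝ) * (x j - y j) ^ 2) / ‖x - y‖ ^ (d + 2)) := by
  obtain ⟨L, hL, hLw⟩ := exists_hasFDerivAt_setIntegral_gradN_sub hD hDfin hε
  have hentry : ∀ j k, L (EuclideanSpace.single k 1) j =
      (d : ℝ)⁻¹ * D.indicator 1 x * (if j = k then 1 else 0) +
        (sphereVol d)⁻¹ * ∫ y in D \ ball x (infDist x (frontier D)),
          ((if j = k then ‖x - y‖ ^ 2 else 0) - d * ((x j - y j) * (x k - y k))) /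
            ‖x - y‖ ^ (d + 2) := fun j k => by
    have hint := integrableOn_hessN_sub hε hD hDfin x (EuclideanSpace.single k 1)
    rw [hLw, PiLp.add_apply, eval_integral_piLp fun i => hint.eval_piLp i]
    simp only [hessN_single_apply, integral_const_mul, PiLp.smul_apply, PiLp.single_apply,
      smul_eq_mul, PiLp.sub_apply]
  refine ⟨-L, hL.neg, fun j k hjk => ?_, fun j => ?_⟩
  · rw [neg_apply, PiLp.neg_apply, hentry]
    simp only [hjk, if_false, zero_sub, mul_zero, zero_add, mul_div_assoc, neg_div, integral_neg,
      integral_const_mul]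
    ring
  · rw [neg_apply, PiLp.neg_apply, hentry]
    simp only [if_true, sq, one_div, mul_one]
    change -(_ * D.indicator (fun _ => 1) x + _) = _
    ring


/-- Lemma 7.1: formulas for the partial derivatives of the patch velocity off the boundary. -/
theorem patch_velocity_gradient_formulas
    (d : ℕ) (hd : 2 ≤ d)
    (D : Set (EuclideanSpace ℝ (Fin d))) (hDo : IsOpen D) (hDb : Bornology.IsBounded D)
    (x : EuclideanSpace ℝ (Fin d)) (hx : x ∉ frontier D)
    (hε : 0 < Metric.infDist x (frontier D)) :
    ∃ L : EuclideanSpace ℝ (Fin d) →L[ℝ] EuclideanSpace ℝ (Fin d),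
      HasFDerivAt (fun z => -(∫ y in D, gradN d (z - y))) L x ∧
      (∀ j k : Fin d, j ≠ k →
        L (EuclideanSpace.single k 1) j =
          ((d : ℝ) / sphereVol d) *
            ∫ y in D \ Metric.ball x (Metric.infDist x (frontier D)),
              (x j - y j) * (x k - y k) / ‖x - y‖ ^ (d + 2)) ∧
      (∀ j : Fin d,
        L (EuclideanSpace.single j 1) j =
          -(1 / (d : ℝ)) * Set.indicator D (fun _ => (1:ℝ)) x -
            (1 / sphereVol d) *
              ∫ y in D \ Metric.ball x (Metric.infDist x (frontier D)),
                (‖x - y‖ ^ 2 - (d : ℝ) * (x j - y j) ^ 2) / ‖x - y‖ ^ (d + 2)) := by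
  have : NeZero d := ⟨by omega⟩
  exact patch_velocity_gradient_formulas_general hDo.measurableSet hDb.measure_lt_top.ne hε
end

section
/- A priori Hölder bound for the transported defining function: assume the patch flow setup on [0,T], let g : [0,T] → [0,∞) be integrable with v(·,s) Lipschitz of constant at most g(s) for each s, and let Φ : ℝ^d × [0,T] → ℝ be continuous such that for each t the function Φ(·,t) is a defining function for D_t of class C^{1+γ} and, for every α ∈ ℝ^d and t ∈ [0,T], the map t ↦ ∇Φ(X(α,t),t) is differentiable with derivative ∫_{D_t} ∇²N(X(α,t)-y) (∇Φ(X(α,t),t) - ∇Φ(y,t)) dy. Then there is a constant C depending only on d and γ such that for all t ∈ [0,T], ‖∇Φ(·,t)‖_γ ≤ ‖∇Φ(·,0)‖_γ · exp( C ∫_0^t (1 + g(s)) ds ). -/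
/-!
Compare two particle trajectories. Since `v` is Lipschitz with constant `g`, their distance changes
at a relative rate at most `g`. The gradients of the defining function carried by the two particles
satisfy an evolution equation whose right-hand side is the commutator `∫_D ∇²N(x - y)(f x - f y) dy`
of `f = ∇Φ`. Splitting this integral at distance comparable to the separation `ρ` of the particles,
the near parts and the variation of `∇²N` in the far part are `O(‖f‖_γ ρ ^ γ)`, while the remaining
far part is `f x - f x'` times an integral of `∇²N`, which equals `∇v` up to a bounded error and so
is at most a constant plus `g`. Hence every Hölder quotient along a pair of trajectories grows at a
rate at most a constant times `1 + g` times the Hölder seminorm. As a supremum of continuous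
functions of time, the seminorm is a priori only lower semicontinuous, and a Baire category argument
supplies the local boundedness needed to apply Gronwall's inequality.
-/

open MeasureTheory Metric Set
open scoped RealInnerProductSpace

section RadialIntegrals

open Module

lemma eqOn_pow_smul_indicator_rpow {n : ℕ} (hn : 0 < n) (S : Set ℝ) (p : ℝ) :
    EqOn (fun r : ℝ => r ^ (n - 1) • S.indicator (fun r => r ^ p) r)
      (S.indicator fun r => r ^ ((n : ℝ) - 1 + p)) (Ioi 0) := by
  intro r (hr : 0 < r)
  by_cases hrS : r ∈ S
  · simp only [indicator_of_mem hrS, smul_eq_mul]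
    rw [← Real.rpow_natCast, Nat.cast_pred hn, ← Real.rpow_add hr]
  · simp only [indicator_of_notMem hrS, smul_zero]

variable {E F : Type*} [NormedAddCommGroup E]

lemma indicator_norm_sub_rpow (S : Set ℝ) (p : ℝ) (x : E) :
    ((‖x - ·‖) ⁻¹' S).indicator (fun y => ‖x - y‖ ^ p)
      = fun y => S.indicator (fun r => r ^ p) ‖x - y‖ := rfl

lemma ball_eq_norm_sub_preimage (x : E) (ρ : ℝ) : ball x ρ = (‖x - ·‖) ⁻¹' Iio ρ := by
  ext y; simp [dist_eq_norm']

variable [MeasurableSpace E]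

lemma measurableSet_norm_sub_preimage [BorelSpace E] {S : Set ℝ} (hS : MeasurableSet S) (x : E) :
    MeasurableSet ((‖x - ·‖) ⁻¹' S) :=
  (by fun_prop : Measurable (‖x - ·‖)) hS

variable [NormedSpace ℝ E]

/-- The mass of the unit sphere in polar coordinates for the Haar measure `μ`. -/
noncomputable def sphereMass (μ : Measure E) : ℝ := finrank ℝ E * μ.real (ball 0 1)

lemma sphereMass_nonneg (μ : Measure E) : 0 ≤ sphereMass μ := by
  unfold sphereMass; positivity

variable [FiniteDimensional ℝ E] [Nontrivial E] [BorelSpace E] (μ : Measure E)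
  [μ.IsAddHaarMeasure]

lemma integrableOn_norm_sub_rpow {S : Set ℝ} (hS : MeasurableSet S) {p : ℝ}
    (hp : IntegrableOn (fun r : ℝ => r ^ (finrank ℝ E - 1 + p)) (Ioi 0 ∩ S)) (x : E) :
    IntegrableOn (fun y => ‖x - y‖ ^ p) ((‖x - ·‖) ⁻¹' S) μ := by
  have radial : Integrable (fun y : E => S.indicator (fun r => r ^ p) ‖y‖) μ := by
    rwa [integrable_fun_norm_addHaar,
      integrableOn_congr_fun (eqOn_pow_smul_indicator_rpow finrank_pos S p) measurableSet_Ioi,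
      integrableOn_indicator_iff hS, inter_comm]
  rw [← integrable_indicator_iff (measurableSet_norm_sub_preimage hS x),
    indicator_norm_sub_rpow]
  exact radial.comp_sub_left x

lemma setIntegral_norm_sub_rpow {S : Set ℝ} (hS : MeasurableSet S) (p : ℝ) (x : E) :
    ∫ y in (‖x - ·‖) ⁻¹' S, ‖x - y‖ ^ p ∂μ
      = sphereMass μ * ∫ r in Ioi 0 ∩ S, r ^ (finrank ℝ E - 1 + p) := by
  rw [← integral_indicator (measurableSet_norm_sub_preimage hS x), indicator_norm_sub_rpow,
    integral_sub_left_eq_self (fun y : E => S.indicator (fun r => r ^ p) ‖y‖) μ x,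
    integral_fun_norm_addHaar,
    setIntegral_congr_fun measurableSet_Ioi (eqOn_pow_smul_indicator_rpow finrank_pos S p),
    setIntegral_indicator hS]
  simp [sphereMass, mul_assoc]

lemma integrableOn_ball_norm_sub_rpow {p : ℝ} (hp : -finrank ℝ E < p) (x : E) {ρ : ℝ}
    (hρ : 0 < ρ) :
    IntegrableOn (fun y => ‖x - y‖ ^ p) (ball x ρ) μ := by
  rw [ball_eq_norm_sub_preimage]
  refine integrableOn_norm_sub_rpow μ measurableSet_Iio ?_ x
  rw [Ioi_inter_Iio, intervalIntegral.integrableOn_Ioo_rpow_iff hρ]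
  linarith

lemma setIntegral_ball_norm_sub_rpow {p : ℝ} (hp : -finrank ℝ E < p) (x : E) {ρ : ℝ}
    (hρ : 0 ≤ ρ) :
    ∫ y in ball x ρ, ‖x - y‖ ^ p ∂μ
      = sphereMass μ * (ρ ^ (finrank ℝ E + p) / (finrank ℝ E + p)) := by
  have hn : finrank ℝ E - 1 + p + 1 = finrank ℝ E + p := by ring
  rw [ball_eq_norm_sub_preimage, setIntegral_norm_sub_rpow μ measurableSet_Iio, Ioi_inter_Iio,
    ← integral_Ioc_eq_integral_Ioo, ← intervalIntegral.integral_of_le hρ,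
    integral_rpow (Or.inl (by linarith)), hn, Real.zero_rpow (by linarith), sub_zero]

lemma integrableOn_compl_ball_norm_sub_rpow {p : ℝ} (hp : p < -finrank ℝ E) (x : E) {ρ : ℝ}
    (hρ : 0 < ρ) : IntegrableOn (fun y => ‖x - y‖ ^ p) (ball x ρ)ᶜ μ := by
  rw [ball_eq_norm_sub_preimage, ← preimage_compl, compl_Iio]
  refine integrableOn_norm_sub_rpow μ measurableSet_Ici ?_ x
  rw [inter_eq_right.2 (Ici_subset_Ioi.2 hρ), integrableOn_Ici_iff_integrableOn_Ioi]
  exact integrableOn_Ioi_rpow_of_lt (by linarith) hρ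

lemma setIntegral_compl_ball_norm_sub_rpow {p : ℝ} (hp : p < -finrank ℝ E) (x : E) {ρ : ℝ}
    (hρ : 0 < ρ) :
    ∫ y in (ball x ρ)ᶜ, ‖x - y‖ ^ p ∂μ
      = sphereMass μ * (ρ ^ (finrank ℝ E + p) / -(finrank ℝ E + p)) := by
  have hn : finrank ℝ E - 1 + p + 1 = finrank ℝ E + p := by ring
  rw [ball_eq_norm_sub_preimage, ← preimage_compl, compl_Iio,
    setIntegral_norm_sub_rpow μ measurableSet_Ici, inter_eq_right.2 (Ici_subset_Ioi.2 hρ),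
    integral_Ici_eq_integral_Ioi, integral_Ioi_rpow_of_lt (by linarith) hρ, hn, neg_div,
    div_neg]

variable [NormedAddCommGroup F] {μ} {h : E → F} {A : Set E} {x : E} {c p ρ : ℝ}

lemma ae_restrict_norm_le_of_ne (hA : MeasurableSet A)
    (hh : ∀ y ∈ A, y ≠ x → ‖h y‖ ≤ c * ‖x - y‖ ^ p) :
    ∀ᵐ y ∂μ.restrict A, ‖h y‖ ≤ c * ‖x - y‖ ^ p := by
  rw [ae_restrict_iff' hA]
  filter_upwards [μ.ae_ne x] with y hyx hyA using hh y hyA hyx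

lemma integrableOn_of_norm_le_rpow (hp : -finrank ℝ E < p) (hA : MeasurableSet A)
    (hAb : Bornology.IsBounded A) (hcont : ContinuousOn h {x}ᶜ)
    (hh : ∀ y ∈ A, y ≠ x → ‖h y‖ ≤ c * ‖x - y‖ ^ p) : IntegrableOn h A μ := by
  obtain ⟨R, hR, hAR⟩ := hAb.subset_ball_lt 0 x
  have hmeas : AEStronglyMeasurable h μ := by
    simpa only [restrict_compl_singleton] using
      hcont.aestronglyMeasurable (μ := μ) (measurableSet_singleton x).compl
  exact (((integrableOn_ball_norm_sub_rpow μ hp x hR).mono_set hAR).const_mul c).mono'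
    hmeas.restrict (ae_restrict_norm_le_of_ne hA hh)

variable [NormedSpace ℝ F]

lemma norm_setIntegral_le_mul_setIntegral_rpow {B : Set E} (hA : MeasurableSet A) (hAB : A ⊆ B)
    (hB : IntegrableOn (fun y => ‖x - y‖ ^ p) B μ) (hc : 0 ≤ c)
    (hh : ∀ y ∈ A, y ≠ x → ‖h y‖ ≤ c * ‖x - y‖ ^ p) :
    ‖∫ y in A, h y ∂μ‖ ≤ c * ∫ y in B, ‖x - y‖ ^ p ∂μ := by
  calc ‖∫ y in A, h y ∂μ‖ ≤ ∫ y in A, c * ‖x - y‖ ^ p ∂μ :=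
        norm_integral_le_of_norm_le ((hB.mono_set hAB).const_mul c)
          (ae_restrict_norm_le_of_ne hA hh)
    _ = c * ∫ y in A, ‖x - y‖ ^ p ∂μ := integral_const_mul _ _
    _ ≤ c * ∫ y in B, ‖x - y‖ ^ p ∂μ := by
        refine mul_le_mul_of_nonneg_left (setIntegral_mono_set hB ?_ hAB.eventuallyLE) hc
        exact .of_forall fun y => by positivity

lemma norm_setIntegral_le_of_subset_ball (hp : -finrank ℝ E < p) (hρ : 0 < ρ)
    (hA : MeasurableSet A) (hAx : A ⊆ ball x ρ) (hc : 0 ≤ c)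
    (hh : ∀ y ∈ A, y ≠ x → ‖h y‖ ≤ c * ‖x - y‖ ^ p) :
    ‖∫ y in A, h y ∂μ‖
      ≤ c * (sphereMass μ * (ρ ^ (finrank ℝ E + p) / (finrank ℝ E + p))) := by
  rw [← setIntegral_ball_norm_sub_rpow μ hp x hρ.le]
  exact norm_setIntegral_le_mul_setIntegral_rpow hA hAx
    (integrableOn_ball_norm_sub_rpow μ hp x hρ) hc hh

lemma norm_setIntegral_le_of_subset_compl_ball (hp : p < -finrank ℝ E) (hρ : 0 < ρ)
    (hA : MeasurableSet A) (hAx : A ⊆ (ball x ρ)ᶜ) (hc : 0 ≤ c)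
    (hh : ∀ y ∈ A, y ≠ x → ‖h y‖ ≤ c * ‖x - y‖ ^ p) :
    ‖∫ y in A, h y ∂μ‖
      ≤ c * (sphereMass μ * (ρ ^ (finrank ℝ E + p) / -(finrank ℝ E + p))) := by
  rw [← setIntegral_compl_ball_norm_sub_rpow μ hp x hρ]
  exact norm_setIntegral_le_mul_setIntegral_rpow hA hAx
    (integrableOn_compl_ball_norm_sub_rpow μ hp x hρ) hc hh

end RadialIntegrals

section Kernels

open Module

variable {E F : Type*} [NormedAddCommGroup E] [NormedSpace ℝ E] [NormedAddCommGroup F]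
  [NormedSpace ℝ F]

/-- Pointwise bounds satisfied by a kernel homogeneous of degree `1 - n` on an `n`-dimensional
space, such as the gradient of the fundamental solution of the Laplacian. The same constant `A`
serves in all three estimates; nothing is assumed at the origin. -/
structure IsPotentialKernel (k : E → F) (A : ℝ) : Prop where
  contDiffOn : ContDiffOn ℝ 1 k {0}ᶜ
  norm_le : ∀ ⦃z⦄, z ≠ 0 → ‖k z‖ ≤ A * ‖z‖ ^ (1 - finrank ℝ E : ℝ)
  norm_fderiv_le : ∀ ⦃z⦄, z ≠ 0 → ‖fderiv ℝ k z‖ ≤ A * ‖z‖ ^ (-finrank ℝ E : ℝ)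
  norm_fderiv_sub_le : ∀ ⦃z h⦄, z ≠ 0 → 2 * ‖h‖ ≤ ‖z‖ →
    ‖fderiv ℝ k (z + h) - fderiv ℝ k z‖ ≤ A * ‖h‖ * ‖z‖ ^ (-finrank ℝ E - 1 : ℝ)

lemma half_norm_le_norm_of_mem_closedBall {E : Type*} [SeminormedAddCommGroup E]
    {z h u : E} (hh : 2 * ‖h‖ ≤ ‖z‖) (hu : u ∈ closedBall z ‖h‖) : ‖z‖ / 2 ≤ ‖u‖ := by
  have hzu : ‖z‖ - ‖u‖ ≤ ‖h‖ :=
    (norm_sub_norm_le z u).trans (by rwa [mem_closedBall, dist_eq_norm'] at hu)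
  linarith

namespace IsPotentialKernel

variable {k : E → F} {A : ℝ}

lemma nonneg [Nontrivial E] (hk : IsPotentialKernel k A) : 0 ≤ A := by
  obtain ⟨z, hz⟩ := exists_ne (0 : E)
  exact nonneg_of_mul_nonneg_left ((norm_nonneg _).trans (hk.norm_le hz)) (by positivity)

lemma differentiableAt (hk : IsPotentialKernel k A) {z : E} (hz : z ≠ 0) :
    DifferentiableAt ℝ k z :=
  (hk.contDiffOn.contDiffAt (isOpen_compl_singleton.mem_nhds hz)).differentiableAt one_ne_zero

lemma continuousOn_fderiv (hk : IsPotentialKernel k A) : ContinuousOn (fderiv ℝ k) {0}ᶜ :=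
  hk.contDiffOn.continuousOn_fderiv_of_isOpen isOpen_compl_singleton le_rfl

lemma norm_sub_sub_fderiv_le (hk : IsPotentialKernel k A) {z h : E} (hz : z ≠ 0)
    (hh : 2 * ‖h‖ ≤ ‖z‖) :
    ‖k (z + h) - k z - fderiv ℝ k z h‖
      ≤ A * ‖h‖ * ‖z‖ ^ (-finrank ℝ E - 1 : ℝ) * ‖h‖ := by
  have hz' : 0 < ‖z‖ := norm_pos_iff.2 hz
  have hA : 0 ≤ A * ‖z‖ ^ (-finrank ℝ E - 1 : ℝ) := by
    have : Nontrivial E := ⟨z, 0, hz⟩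
    have := hk.nonneg
    positivity
  have bound : ∀ u ∈ closedBall z ‖h‖,
      ‖fderiv ℝ k u - fderiv ℝ k z‖ ≤ A * ‖h‖ * ‖z‖ ^ (-finrank ℝ E - 1 : ℝ) := by
    intro u hu
    rw [mem_closedBall, dist_eq_norm] at hu
    have := hk.norm_fderiv_sub_le hz (h := u - z) (by linarith)
    rw [add_sub_cancel] at this
    calc _ ≤ A * ‖z‖ ^ (-finrank ℝ E - 1 : ℝ) * ‖u - z‖ := by linarith
      _ ≤ A * ‖z‖ ^ (-finrank ℝ E - 1 : ℝ) * ‖h‖ := by gcongr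
      _ = _ := by ring
  have := (convex_closedBall z ‖h‖).norm_image_sub_le_of_norm_fderiv_le' (fun u hu =>
    hk.differentiableAt (norm_pos_iff.1 ((half_pos hz').trans_le
      (half_norm_le_norm_of_mem_closedBall hh hu)))) bound
    (mem_closedBall_self (norm_nonneg h)) (y := z + h) (by simp)
  rwa [add_sub_cancel_left] at this

end IsPotentialKernel

/-- `f` is positively homogeneous of real degree `p` away from the origin. -/
def IsPositivelyHomogeneous (f : E → F) (p : ℝ) : Prop :=
  ∀ ⦃c : ℝ⦄, 0 < c → ∀ ⦃z⦄, z ≠ 0 → f (c • z) = c ^ p • f z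

namespace IsPositivelyHomogeneous

variable {f : E → F} {p : ℝ}

lemma fderiv (hf : IsPositivelyHomogeneous f p) :
    IsPositivelyHomogeneous (fderiv ℝ f) (p - 1) := by
  intro c hc z hz
  have scaled : (fun y => f (c • y)) =ᶠ[nhds z] c ^ p • f := by
    filter_upwards [isOpen_compl_singleton.mem_nhds hz] with y hy using hf hc hy
  have hderiv : c • _root_.fderiv ℝ f (c • z) = c ^ p • _root_.fderiv ℝ f z := by
    rw [← fderiv_comp_smul, scaled.fderiv_eq, fderiv_const_smul_field, Pi.smul_apply]
  rw [Real.rpow_sub_one hc.ne', div_eq_inv_mul, mul_smul, ← hderiv, inv_smul_smul₀ hc.ne']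

variable [FiniteDimensional ℝ E]

lemma exists_norm_le (hf : IsPositivelyHomogeneous f p) (hcont : ContinuousOn f {0}ᶜ) :
    ∃ C, 0 ≤ C ∧ ∀ ⦃z⦄, z ≠ 0 → ‖f z‖ ≤ C * ‖z‖ ^ p := by
  have hsphere : sphere (0 : E) 1 ⊆ {0}ᶜ := fun u hu => ne_of_mem_sphere hu one_ne_zero
  obtain ⟨C, hC⟩ := (isCompact_sphere (0 : E) 1).exists_bound_of_continuousOn
    (hcont.mono hsphere)
  refine ⟨max C 0, le_max_right _ _, fun z hz => ?_⟩
  have hz' : 0 < ‖z‖ := norm_pos_iff.2 hz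
  have hu : ‖z‖⁻¹ • z ∈ sphere (0 : E) 1 := by
    simp [norm_smul, hz'.ne']
  calc ‖f z‖ = ‖f (‖z‖ • ‖z‖⁻¹ • z)‖ := by rw [smul_inv_smul₀ hz'.ne']
    _ = ‖f (‖z‖⁻¹ • z)‖ * ‖z‖ ^ p := by
        rw [hf hz' (hsphere hu), norm_smul, Real.norm_of_nonneg (by positivity), mul_comm]
    _ ≤ max C 0 * ‖z‖ ^ p := by
        gcongr
        exact (hC _ hu).trans (le_max_left _ _)

lemma exists_norm_fderiv_sub_le (hf : IsPositivelyHomogeneous f p) (hp : p ≤ 1)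
    (hdiff : ContDiffOn ℝ 1 f {0}ᶜ) :
    ∃ C, 0 ≤ C ∧ ∀ ⦃z h⦄, z ≠ 0 → 2 * ‖h‖ ≤ ‖z‖ →
      ‖f (z + h) - f z‖ ≤ C * ‖h‖ * ‖z‖ ^ (p - 1) := by
  obtain ⟨C, hC, bound⟩ := hf.fderiv.exists_norm_le
    (hdiff.continuousOn_fderiv_of_isOpen isOpen_compl_singleton le_rfl)
  refine ⟨C * (2⁻¹ : ℝ) ^ (p - 1), by positivity, fun z h hz hh => ?_⟩
  have hz' : 0 < ‖z‖ := norm_pos_iff.2 hz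
  have hne : ∀ u ∈ closedBall z ‖h‖, u ≠ 0 := fun u hu =>
    norm_pos_iff.1 ((half_pos hz').trans_le (half_norm_le_norm_of_mem_closedBall hh hu))
  have hderiv : ∀ u ∈ closedBall z ‖h‖, ‖_root_.fderiv ℝ f u‖ ≤ C * (‖z‖ / 2) ^ (p - 1) := by
    intro u hu
    refine (bound (hne u hu)).trans (mul_le_mul_of_nonneg_left ?_ hC)
    exact Real.rpow_le_rpow_of_nonpos (half_pos hz')
      (half_norm_le_norm_of_mem_closedBall hh hu) (by linarith)
  have hmvt := (convex_closedBall z ‖h‖).norm_image_sub_le_of_norm_fderiv_le (𝕜 := ℝ)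
    (fun u hu => (hdiff.contDiffAt (isOpen_compl_singleton.mem_nhds
      (hne u hu))).differentiableAt one_ne_zero) hderiv
    (mem_closedBall_self (norm_nonneg h)) (y := z + h) (by simp)
  rw [add_sub_cancel_left, div_eq_inv_mul, Real.mul_rpow (by norm_num) hz'.le] at hmvt
  exact hmvt.trans_eq (by ring)

lemma exists_isPotentialKernel (hf : IsPositivelyHomogeneous f (1 - finrank ℝ E))
    (hdiff : ContDiffOn ℝ 2 f {0}ᶜ) : ∃ A, IsPotentialKernel f A := by
  have hone : ContDiffOn ℝ 1 f {0}ᶜ := hdiff.of_le one_le_two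
  have hderiv : IsPositivelyHomogeneous (_root_.fderiv ℝ f) (-finrank ℝ E) := by
    convert hf.fderiv using 1; ring
  obtain ⟨C₀, hC₀, bound₀⟩ := hf.exists_norm_le hone.continuousOn
  obtain ⟨C₁, hC₁, bound₁⟩ := hderiv.exists_norm_le
    (hone.continuousOn_fderiv_of_isOpen isOpen_compl_singleton le_rfl)
  obtain ⟨C₂, hC₂, bound₂⟩ := hderiv.exists_norm_fderiv_sub_le
    (by linarith [(Nat.cast_nonneg (finrank ℝ E) : (0 : ℝ) ≤ _)])
    (hdiff.fderiv_of_isOpen isOpen_compl_singleton (by norm_num))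
  refine ⟨C₀ + C₁ + C₂, hone, fun z hz => (bound₀ hz).trans ?_,
    fun z hz => (bound₁ hz).trans ?_, fun z h hz hh => (bound₂ hz hh).trans ?_⟩ <;>
  · gcongr
    linarith

end IsPositivelyHomogeneous

end Kernels

section NewtonianKernel

lemma hasFDerivAt_norm_rpow_of_ne_zero {E : Type*} [NormedAddCommGroup E] [InnerProductSpace ℝ E]
    {z : E} (hz : z ≠ 0) (p : ℝ) :
    HasFDerivAt (fun y : E => ‖y‖ ^ p) ((p * ‖z‖ ^ (p - 2)) • innerSL ℝ z) z := by
  have hsq : ∀ (y : E) (q : ℝ), (‖y‖ ^ 2) ^ q = ‖y‖ ^ (2 * q) := fun y q => by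
    rw [← Real.rpow_natCast_mul (norm_nonneg y), Nat.cast_ofNat]
  have := (hasStrictFDerivAt_norm_sq z).hasFDerivAt.rpow_const (p := p / 2)
    (.inl (pow_ne_zero 2 (norm_ne_zero_iff.2 hz)))
  simp only [hsq, ← Nat.cast_smul_eq_nsmul ℝ, smul_smul, Nat.cast_ofNat, mul_sub,
    mul_div_cancel₀ p (two_ne_zero' ℝ), mul_one] at this
  convert this using 2
  ring

lemma gradN_eq_smul (d : ℕ) (z : EuclideanSpace ℝ (Fin d)) :
    gradN d z = (sphereVol d)⁻¹ • ‖z‖ ^ (-d : ℝ) • z := by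
  rw [gradN, Real.rpow_neg (norm_nonneg z), Real.rpow_natCast, smul_smul, mul_inv]

lemma isPositivelyHomogeneous_gradN (d : ℕ) : IsPositivelyHomogeneous (gradN d) (1 - d) := by
  intro c hc z _
  rw [gradN_eq_smul, gradN_eq_smul, norm_smul, Real.norm_of_nonneg hc.le,
    Real.mul_rpow hc.le (norm_nonneg z), sub_eq_neg_add, Real.rpow_add_one hc.ne']
  module

lemma contDiffOn_gradN (d : ℕ) : ContDiffOn ℝ 2 (gradN d) {0}ᶜ := by
  intro z hz
  rw [funext (gradN_eq_smul d)]
  exact ((((contDiffAt_norm ℝ hz).rpow_const_of_ne (norm_ne_zero_iff.2 hz)).smul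
    contDiffAt_id).const_smul _).contDiffWithinAt

lemma exists_isPotentialKernel_gradN (d : ℕ) : ∃ A, IsPotentialKernel (gradN d) A :=
  IsPositivelyHomogeneous.exists_isPotentialKernel
    (by simpa using isPositivelyHomogeneous_gradN d) (contDiffOn_gradN d)

lemma fderiv_gradN {d : ℕ} {z : EuclideanSpace ℝ (Fin d)} (hz : z ≠ 0)
    (w : EuclideanSpace ℝ (Fin d)) : fderiv ℝ (gradN d) z w = hessN d z w := by
  have hderiv := ((hasFDerivAt_norm_rpow_of_ne_zero hz (-d)).smul (hasFDerivAt_id z)).const_smul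
    (sphereVol d)⁻¹
  have hpow : ‖z‖ ^ (-d - 2 : ℝ) = (‖z‖ ^ (d + 2))⁻¹ := by
    rw [← neg_add', Real.rpow_neg (norm_nonneg z)]
    norm_cast
  have hpow' : ‖z‖ ^ (-d : ℝ) = (‖z‖ ^ d)⁻¹ := by
    rw [Real.rpow_neg (norm_nonneg z), Real.rpow_natCast]
  rw [funext (gradN_eq_smul d)]
  refine (congrArg (· w) hderiv.fderiv).trans ?_
  simp [hessN, hpow, hpow', sub_eq_add_neg (_ • _) (_ • _)]

end NewtonianKernel

section SingularIntegrals

open Module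
open scoped NNReal

variable {E F : Type*} [NormedAddCommGroup E] [NormedSpace ℝ E] [NormedAddCommGroup F]
  [NormedSpace ℝ F]

lemma mapsTo_sub_left_compl_singleton {E : Type*} [AddGroup E] (x : E) :
    MapsTo (x - ·) {x}ᶜ {0}ᶜ :=
  fun _ hy => sub_ne_zero.2 (Ne.symm hy)

namespace IsPotentialKernel

variable {k : E → F} {A : ℝ} {γ H : ℝ≥0} {f : E → E}

lemma continuousOn_comp_sub_left (hk : IsPotentialKernel k A) (x : E) :
    ContinuousOn (fun y => k (x - y)) {x}ᶜ :=
  hk.contDiffOn.continuousOn.comp (by fun_prop) (mapsTo_sub_left_compl_singleton x)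

lemma continuousOn_fderiv_comp_sub_left (hk : IsPotentialKernel k A) (x : E) :
    ContinuousOn (fun y => fderiv ℝ k (x - y)) {x}ᶜ :=
  hk.continuousOn_fderiv.comp (by fun_prop) (mapsTo_sub_left_compl_singleton x)

lemma norm_fderiv_apply_sub_le (hk : IsPotentialKernel k A) (hf : HolderWith H γ f) {x y : E}
    (hyx : y ≠ x) :
    ‖fderiv ℝ k (x - y) (f x - f y)‖ ≤ A * H * ‖x - y‖ ^ (γ - finrank ℝ E : ℝ) := by
  have hxy : x - y ≠ 0 := sub_ne_zero.2 hyx.symm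
  have hf' : ‖f x - f y‖ ≤ H * ‖x - y‖ ^ (γ : ℝ) := by
    simpa only [dist_eq_norm] using hf.dist_le x y
  calc _ ≤ A * ‖x - y‖ ^ (-finrank ℝ E : ℝ) * (H * ‖x - y‖ ^ (γ : ℝ)) :=
        (fderiv ℝ k (x - y)).le_of_opNorm_le_of_le (hk.norm_fderiv_le hxy) hf'
    _ = _ := by
        rw [sub_eq_neg_add (γ : ℝ), Real.rpow_add (norm_pos_iff.2 hxy)]
        ring

lemma norm_fderiv_sub_apply_le (hk : IsPotentialKernel k A) (hγ : γ ≤ 1)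
    (hf : HolderWith H γ f) {x x' y : E} (hyx : y ≠ x) (hy : 2 * ‖x - x'‖ ≤ ‖x - y‖) :
    ‖(fderiv ℝ k (x - y) - fderiv ℝ k (x' - y)) (f x' - f y)‖
      ≤ 2 * A * H * ‖x - x'‖ * ‖x - y‖ ^ (γ - finrank ℝ E - 1 : ℝ) := by
  have hxy : x - y ≠ 0 := sub_ne_zero.2 hyx.symm
  have hkernel : ‖fderiv ℝ k (x - y) - fderiv ℝ k (x' - y)‖
      ≤ A * ‖x - x'‖ * ‖x - y‖ ^ (-finrank ℝ E - 1 : ℝ) := by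
    have := hk.norm_fderiv_sub_le hxy (h := x' - x) (by rwa [norm_sub_rev])
    rwa [sub_add_sub_cancel', norm_sub_rev, norm_sub_rev x' x] at this
  have hf' : ‖f x' - f y‖ ≤ 2 * H * ‖x - y‖ ^ (γ : ℝ) := by
    have htri : ‖x' - y‖ ≤ 2 * ‖x - y‖ := by
      linarith [norm_sub_le_norm_sub_add_norm_sub x' x y, norm_sub_rev x x', norm_nonneg (x - x')]
    have htwo : (2 : ℝ) ^ (γ : ℝ) ≤ 2 := Real.rpow_le_self_of_one_le one_le_two (by simpa)
    calc ‖f x' - f y‖ ≤ H * ‖x' - y‖ ^ (γ : ℝ) := by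
          simpa only [dist_eq_norm] using hf.dist_le x' y
      _ ≤ H * (2 * ‖x - y‖) ^ (γ : ℝ) := by gcongr
      _ ≤ H * (2 * ‖x - y‖ ^ (γ : ℝ)) := by
          rw [Real.mul_rpow two_pos.le (norm_nonneg _)]
          gcongr
      _ = _ := by ring
  refine (ContinuousLinearMap.le_of_opNorm_le_of_le _ hkernel hf').trans_eq ?_
  rw [sub_sub, sub_eq_neg_add (γ : ℝ), neg_add', Real.rpow_add (norm_pos_iff.2 hxy)]
  ring

end IsPotentialKernel

variable [MeasurableSpace E]

/-- The convolution `∫_D k (x - y) dy` of the kernel `k` with the indicator function of the patch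
`D`; the velocity generated by the patch is `-patchPotential volume (gradN d) D`. -/
noncomputable def patchPotential (μ : Measure E) (k : E → F) (D : Set E) (x : E) : F :=
  ∫ y in D, k (x - y) ∂μ

/-- The commutator `∫_D Dk (x - y) (f x - f y) dy`. The difference `f x - f y` makes the integral
absolutely convergent for Hölder continuous `f`, although `Dk` is critically singular. -/
noncomputable def patchCommutator (μ : Measure E) (k : E → F) (D : Set E) (f : E → E) (x : E) :
    F :=
  ∫ y in D, fderiv ℝ k (x - y) (f x - f y) ∂μ

namespace IsPotentialKernel

variable [FiniteDimensional ℝ E] [Nontrivial E] [BorelSpace E] {μ : Measure E}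
  [μ.IsAddHaarMeasure] {k : E → F} {A : ℝ} {D : Set E} {γ H : ℝ≥0} {f : E → E}

lemma integrableOn_comp_sub_left (hk : IsPotentialKernel k A) (hD : MeasurableSet D)
    (hDb : Bornology.IsBounded D) (x : E) : IntegrableOn (fun y => k (x - y)) D μ :=
  integrableOn_of_norm_le_rpow (p := 1 - finrank ℝ E) (by linarith) hD hDb
    (hk.continuousOn_comp_sub_left x) fun _ _ hyx => hk.norm_le (sub_ne_zero.2 hyx.symm)

lemma integrableOn_fderiv_apply_sdiff_ball (hk : IsPotentialKernel k A) (hD : MeasurableSet D)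
    (hDb : Bornology.IsBounded D) (x w : E) {ρ : ℝ} (hρ : 0 < ρ) :
    IntegrableOn (fun y => fderiv ℝ k (x - y) w) (D \ ball x ρ) μ := by
  refine integrableOn_of_norm_le_rpow (p := 0) (c := A * ρ ^ (-finrank ℝ E : ℝ) * ‖w‖)
    (by simp [finrank_pos]) (hD.diff measurableSet_ball) (hDb.subset sdiff_subset)
    ((hk.continuousOn_fderiv_comp_sub_left x).clm_apply continuousOn_const) fun y hy hyx => ?_
  have hdist : ρ ≤ ‖x - y‖ := by simpa [dist_eq_norm'] using hy.2
  rw [Real.rpow_zero, mul_one]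
  refine (fderiv ℝ k (x - y)).le_of_opNorm_le ((hk.norm_fderiv_le
    (sub_ne_zero.2 hyx.symm)).trans (mul_le_mul_of_nonneg_left ?_ hk.nonneg)) w
  exact Real.rpow_le_rpow_of_nonpos hρ hdist (by simp)

lemma norm_setIntegral_comp_sub_left_le (hk : IsPotentialKernel k A) {S : Set E}
    (hS : MeasurableSet S) {x : E} {ρ : ℝ} (hρ : 0 < ρ) (hSx : S ⊆ ball x ρ) :
    ‖∫ y in S, k (x - y) ∂μ‖ ≤ A * sphereMass μ * ρ := by
  have := norm_setIntegral_le_of_subset_ball (μ := μ) (p := 1 - finrank ℝ E) (by linarith) hρ hS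
    hSx hk.nonneg fun y _ hyx => hk.norm_le (sub_ne_zero.2 hyx.symm)
  simpa only [add_sub_cancel, Real.rpow_one, div_one, ← mul_assoc] using this

lemma norm_setIntegral_taylor_le (hk : IsPotentialKernel k A) {S : Set E} (hS : MeasurableSet S)
    {x h : E} (hh : h ≠ 0) (hSx : S ⊆ (ball x (2 * ‖h‖))ᶜ) :
    ‖∫ y in S, (k (x + h - y) - k (x - y) - fderiv ℝ k (x - y) h) ∂μ‖
      ≤ A * sphereMass μ * ‖h‖ := by
  have hA := hk.nonneg
  have hσ := sphereMass_nonneg μ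
  have := norm_setIntegral_le_of_subset_compl_ball (μ := μ) (p := -finrank ℝ E - 1)
    (c := A * ‖h‖ * ‖h‖) (h := fun y => k (x + h - y) - k (x - y) - fderiv ℝ k (x - y) h)
    (by linarith) (by positivity) hS hSx (by positivity) fun y hy hyx => ?_
  · refine this.trans ?_
    rw [show (finrank ℝ E + (-finrank ℝ E - 1) : ℝ) = -1 by ring, Real.rpow_neg_one, neg_neg,
      div_one]
    calc A * ‖h‖ * ‖h‖ * (sphereMass μ * (2 * ‖h‖)⁻¹) = A * sphereMass μ * ‖h‖ * 2⁻¹ := by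
          field_simp
      _ ≤ A * sphereMass μ * ‖h‖ := mul_le_of_le_one_right (by positivity) (by norm_num)
  · have hdist : 2 * ‖h‖ ≤ ‖x - y‖ := by simpa [dist_eq_norm'] using hSx hy
    rw [add_sub_right_comm]
    exact (hk.norm_sub_sub_fderiv_le (sub_ne_zero.2 hyx.symm) hdist).trans_eq (by ring)

lemma setIntegral_fderiv_sdiff_ball_eq (hk : IsPotentialKernel k A) (hD : MeasurableSet D)
    (hDb : Bornology.IsBounded D) (x : E) {h : E} {ρ : ℝ} (hρ : 0 < ρ) :
    ∫ y in D \ ball x ρ, fderiv ℝ k (x - y) h ∂μ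
      = patchPotential μ k D (x + h) - patchPotential μ k D x
        - ∫ y in D ∩ ball x ρ, k (x + h - y) ∂μ + ∫ y in D ∩ ball x ρ, k (x - y) ∂μ
        - ∫ y in D \ ball x ρ, (k (x + h - y) - k (x - y) - fderiv ℝ k (x - y) h) ∂μ := by
  have int := fun z => hk.integrableOn_comp_sub_left (μ := μ) hD hDb z
  have intOut := fun z => (int z).mono_set (sdiff_subset (t := ball x ρ))
  have split := fun z => integral_inter_add_sdiff (measurableSet_ball (x := x) (ε := ρ)) (int z)
  have intSub : IntegrableOn (fun y => k (x + h - y) - k (x - y)) (D \ ball x ρ) μ :=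
    (intOut (x + h)).sub (intOut x)
  rw [integral_sub intSub
      (hk.integrableOn_fderiv_apply_sdiff_ball hD hDb x h hρ),
    integral_sub (intOut (x + h)) (intOut x), patchPotential, patchPotential, ← split x,
    ← split (x + h)]
  abel

lemma norm_setIntegral_fderiv_sdiff_ball_two_mul_norm_le (hk : IsPotentialKernel k A)
    (hD : MeasurableSet D) (hDb : Bornology.IsBounded D) {L : ℝ≥0}
    (hL : LipschitzWith L (patchPotential μ k D)) (x : E) {h : E} (hh : h ≠ 0) :
    ‖∫ y in D \ ball x (2 * ‖h‖), fderiv ℝ k (x - y) h ∂μ‖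
      ≤ (L + 6 * (A * sphereMass μ)) * ‖h‖ := by
  have hin : MeasurableSet (D ∩ ball x (2 * ‖h‖)) := hD.inter measurableSet_ball
  have hball : ball x (2 * ‖h‖) ⊆ ball (x + h) (3 * ‖h‖) :=
    ball_subset_ball' (by rw [dist_self_add_right]; linarith)
  rw [hk.setIntegral_fderiv_sdiff_ball_eq hD hDb x (by positivity)]
  have hpot : ‖patchPotential μ k D (x + h) - patchPotential μ k D x‖ ≤ L * ‖h‖ := by
    simpa using hL.norm_sub_le (x + h) x
  have hshift := hk.norm_setIntegral_comp_sub_left_le (μ := μ) hin (by positivity)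
    (inter_subset_right.trans hball)
  have hnear := hk.norm_setIntegral_comp_sub_left_le (μ := μ) hin (by positivity)
    inter_subset_right
  have hfar := hk.norm_setIntegral_taylor_le (μ := μ) (hD.diff measurableSet_ball) hh
    (sdiff_subset_compl D (ball x (2 * ‖h‖)))
  refine (norm_sub_le_of_le (norm_add_le_of_le (norm_sub_le_of_le hpot hshift) hnear)
    hfar).trans_eq ?_
  ring

lemma norm_setIntegral_fderiv_sdiff_ball_le (hk : IsPotentialKernel k A)
    (hD : MeasurableSet D) (hDb : Bornology.IsBounded D) {L : ℝ≥0}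
    (hL : LipschitzWith L (patchPotential μ k D)) (x w : E) {r : ℝ} (hr : 0 < r) :
    ‖∫ y in D \ ball x (2 * r), fderiv ℝ k (x - y) w ∂μ‖
      ≤ (L + 6 * (A * sphereMass μ)) * ‖w‖ := by
  rcases eq_or_ne w 0 with rfl | hw
  · simp
  have hw' : 0 < ‖w‖ := norm_pos_iff.2 hw
  set c : ℝ := r / ‖w‖
  have hc : 0 < c := by positivity
  have hnorm : ‖c • w‖ = r := by
    rw [norm_smul, Real.norm_of_nonneg hc.le, div_mul_cancel₀ _ hw'.ne']
  refine le_of_mul_le_mul_left ?_ hc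
  calc c * ‖∫ y in D \ ball x (2 * r), fderiv ℝ k (x - y) w ∂μ‖
      = ‖∫ y in D \ ball x (2 * r), fderiv ℝ k (x - y) (c • w) ∂μ‖ := by
        simp only [map_smul, integral_smul, norm_smul, Real.norm_of_nonneg hc.le]
    _ ≤ (L + 6 * (A * sphereMass μ)) * ‖c • w‖ := by
        simpa only [hnorm] using hk.norm_setIntegral_fderiv_sdiff_ball_two_mul_norm_le hD hDb hL x
          (smul_ne_zero hc.ne' hw)
    _ = c * ((L + 6 * (A * sphereMass μ)) * ‖w‖) := by
        rw [norm_smul, Real.norm_of_nonneg hc.le, mul_left_comm]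

lemma integrableOn_fderiv_apply_sub (hk : IsPotentialKernel k A) (hD : MeasurableSet D)
    (hDb : Bornology.IsBounded D) (hγ : 0 < γ) (hf : HolderWith H γ f) (x : E) :
    IntegrableOn (fun y => fderiv ℝ k (x - y) (f x - f y)) D μ :=
  integrableOn_of_norm_le_rpow (by simpa using hγ) hD hDb
    ((hk.continuousOn_fderiv_comp_sub_left x).clm_apply
      (continuous_const.sub (hf.continuous hγ)).continuousOn)
    fun _ _ => hk.norm_fderiv_apply_sub_le hf

lemma norm_setIntegral_fderiv_apply_sub_le (hk : IsPotentialKernel k A) (hγ : 0 < γ)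
    (hf : HolderWith H γ f) {S : Set E} (hS : MeasurableSet S) {x : E} {ρ : ℝ} (hρ : 0 < ρ)
    (hSx : S ⊆ ball x ρ) :
    ‖∫ y in S, fderiv ℝ k (x - y) (f x - f y) ∂μ‖
      ≤ A * H * (sphereMass μ * (ρ ^ (γ : ℝ) / γ)) := by
  have := norm_setIntegral_le_of_subset_ball (μ := μ) (by simpa using hγ) hρ hS hSx
    (mul_nonneg hk.nonneg H.coe_nonneg) fun y _ => hk.norm_fderiv_apply_sub_le hf
  simpa only [add_sub_cancel] using this

lemma norm_setIntegral_fderiv_sub_apply_le (hk : IsPotentialKernel k A) (hγ : γ < 1)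
    (hf : HolderWith H γ f) {S : Set E} (hS : MeasurableSet S) {x x' : E} (hxx' : x ≠ x')
    (hSx : S ⊆ (ball x (2 * ‖x - x'‖))ᶜ) :
    ‖∫ y in S, (fderiv ℝ k (x - y) - fderiv ℝ k (x' - y)) (f x' - f y) ∂μ‖
      ≤ 2 * A * H * (sphereMass μ * (‖x - x'‖ ^ (γ : ℝ) / (1 - γ))) := by
  have hr : 0 < ‖x - x'‖ := norm_sub_pos_iff.2 hxx'
  have hA := hk.nonneg
  have hσ := sphereMass_nonneg μ
  have hγ' : (γ : ℝ) < 1 := by exact_mod_cast hγ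
  have hγ₁ : (0 : ℝ) < 1 - γ := sub_pos.2 hγ'
  have := norm_setIntegral_le_of_subset_compl_ball (μ := μ) (p := γ - finrank ℝ E - 1)
    (by linarith) (by positivity) hS hSx (by positivity) fun y hy hyx =>
      hk.norm_fderiv_sub_apply_le hγ.le hf hyx (by simpa [dist_eq_norm'] using hSx hy)
  refine this.trans ?_
  rw [show (finrank ℝ E + (γ - finrank ℝ E - 1) : ℝ) = γ - 1 by ring, neg_sub]
  calc 2 * A * H * ‖x - x'‖ * (sphereMass μ * ((2 * ‖x - x'‖) ^ (γ - 1 : ℝ) / (1 - γ)))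
      ≤ 2 * A * H * ‖x - x'‖ * (sphereMass μ * (‖x - x'‖ ^ (γ - 1 : ℝ) / (1 - γ))) := by
        gcongr 2 * A * H * ‖x - x'‖ * (sphereMass μ * (?_ / (1 - γ)))
        exact Real.rpow_le_rpow_of_nonpos hr (by linarith) (by linarith)
    _ = _ := by
        rw [Real.rpow_sub_one hr.ne']
        field_simp

lemma patchCommutator_sub_eq (hk : IsPotentialKernel k A) (hD : MeasurableSet D)
    (hDb : Bornology.IsBounded D) (hγ : 0 < γ) (hf : HolderWith H γ f) (x x' : E) {ρ : ℝ}
    (hρ : 0 < ρ) :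
    patchCommutator μ k D f x - patchCommutator μ k D f x'
      = ∫ y in D ∩ ball x ρ, fderiv ℝ k (x - y) (f x - f y) ∂μ
        - ∫ y in D ∩ ball x ρ, fderiv ℝ k (x' - y) (f x' - f y) ∂μ
        + ∫ y in D \ ball x ρ, fderiv ℝ k (x - y) (f x - f x') ∂μ
        + ∫ y in D \ ball x ρ, (fderiv ℝ k (x - y) - fderiv ℝ k (x' - y)) (f x' - f y) ∂μ := by
  have int := fun z => hk.integrableOn_fderiv_apply_sub (μ := μ) hD hDb hγ hf z
  have intOut := fun z => (int z).mono_set (sdiff_subset (t := ball x ρ))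
  have split := fun z => integral_inter_add_sdiff (measurableSet_ball (x := x) (ε := ρ)) (int z)
  have intConst := hk.integrableOn_fderiv_apply_sdiff_ball (μ := μ) hD hDb x (f x - f x') hρ
  have hfar : ∫ y in D \ ball x ρ, (fderiv ℝ k (x - y) - fderiv ℝ k (x' - y)) (f x' - f y) ∂μ
      = ∫ y in D \ ball x ρ, fderiv ℝ k (x - y) (f x - f y) ∂μ
        - ∫ y in D \ ball x ρ, fderiv ℝ k (x - y) (f x - f x') ∂μ
        - ∫ y in D \ ball x ρ, fderiv ℝ k (x' - y) (f x' - f y) ∂μ := by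
    have intSub : IntegrableOn (fun y => fderiv ℝ k (x - y) (f x - f y)
        - fderiv ℝ k (x - y) (f x - f x')) (D \ ball x ρ) μ := (intOut x).sub intConst
    rw [← integral_sub (intOut x) intConst, ← integral_sub intSub (intOut x')]
    simp only [sub_apply, ← map_sub, sub_sub_sub_cancel_left]
  rw [patchCommutator, patchCommutator, ← split x, ← split x', hfar]
  abel

lemma norm_patchCommutator_sub_le (hk : IsPotentialKernel k A) (hD : MeasurableSet D)
    (hDb : Bornology.IsBounded D) {L : ℝ≥0} (hL : LipschitzWith L (patchPotential μ k D))
    (hγ : 0 < γ) (hγ₁ : γ < 1) (hf : HolderWith H γ f) (x x' : E) :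
    ‖patchCommutator μ k D f x - patchCommutator μ k D f x'‖
      ≤ (A * sphereMass μ * (5 / γ + 2 / (1 - γ) + 6) + L) * H * ‖x - x'‖ ^ (γ : ℝ) := by
  rcases eq_or_ne x x' with rfl | hxx'
  · simp [hγ.ne']
  have hr : 0 < ‖x - x'‖ := norm_sub_pos_iff.2 hxx'
  have hA := hk.nonneg
  have hσ := sphereMass_nonneg μ
  have hin : MeasurableSet (D ∩ ball x (2 * ‖x - x'‖)) := hD.inter measurableSet_ball
  have hball : ball x (2 * ‖x - x'‖) ⊆ ball x' (3 * ‖x - x'‖) :=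
    ball_subset_ball' (by rw [dist_eq_norm]; linarith)
  rw [hk.patchCommutator_sub_eq hD hDb hγ hf x x' (ρ := 2 * ‖x - x'‖) (by positivity)]
  have scale : ∀ m : ℝ, 1 ≤ m →
      A * H * (sphereMass μ * ((m * ‖x - x'‖) ^ (γ : ℝ) / γ))
        ≤ A * H * (sphereMass μ * (m * ‖x - x'‖ ^ (γ : ℝ) / γ)) := fun m hm => by
    rw [Real.mul_rpow (by positivity) hr.le]
    gcongr
    exact Real.rpow_le_self_of_one_le hm hγ₁.le
  have hnear := (hk.norm_setIntegral_fderiv_apply_sub_le (μ := μ) hγ hf hin (by positivity)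
    inter_subset_right).trans (scale 2 one_le_two)
  have hshift := (hk.norm_setIntegral_fderiv_apply_sub_le (μ := μ) hγ hf hin (by positivity)
    (inter_subset_right.trans hball)).trans (scale 3 (by norm_num))
  have htrunc := (hk.norm_setIntegral_fderiv_sdiff_ball_le hD hDb hL x (f x - f x') hr).trans
    (mul_le_mul_of_nonneg_left (by simpa only [dist_eq_norm] using hf.dist_le x x')
      (by positivity))
  have hfar := hk.norm_setIntegral_fderiv_sub_apply_le (μ := μ) hγ₁ hf
    (hD.diff measurableSet_ball) hxx' (sdiff_subset_compl D _)
  refine (norm_add_le_of_le (norm_add_le_of_le (norm_sub_le_of_le hnear hshift) htrunc)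
    hfar).trans_eq ?_
  ring

end IsPotentialKernel

end SingularIntegrals

section SemicontinuousGronwall

open Filter Topology

lemma bddAbove_image_of_isBoundedUnder_nhdsWithin {X α : Type*} [TopologicalSpace X]
    [SemilatticeSup α] [Nonempty α] {K : X → α} {s : Set X} (hs : IsCompact s)
    (hK : ∀ x ∈ s, (𝓝[s] x).IsBoundedUnder (· ≤ ·) K) : BddAbove (K '' s) := by
  refine hs.induction_on (p := fun S => BddAbove (K '' S)) (by simp)
    (fun S S' hSS' hS' => hS'.mono (image_mono hSS'))
    (fun S S' hS hS' => by rw [image_union]; exact hS.union hS') fun x hx => ?_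
  obtain ⟨b, hb⟩ := hK x hx
  exact ⟨_, hb, b, forall_mem_image.2 fun y hy => hy⟩

lemma exists_isBoundedUnder_nhds_of_lowerSemicontinuous {X : Type*} [TopologicalSpace X]
    [BaireSpace X] [Nonempty X] {K : X → ℝ} (hK : LowerSemicontinuous K) :
    ∃ p, (𝓝 p).IsBoundedUnder (· ≤ ·) K := by
  obtain ⟨n, p, hp⟩ := nonempty_interior_of_iUnion_of_closed (f := fun n : ℕ => K ⁻¹' Iic (n : ℝ))
    (fun n => lowerSemicontinuous_iff_isClosed_preimage.1 hK n)
    (eq_univ_of_forall fun x => mem_iUnion.2 (exists_nat_ge (K x)))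
  exact ⟨p, n, mem_interior_iff_mem_nhds.1 hp⟩

lemma exists_isBoundedUnder_nhdsWithin_of_lowerSemicontinuous {X : Type*} [MetricSpace X]
    [CompleteSpace X] {K : X → ℝ} (hK : LowerSemicontinuous K) {B : Set X} (hB : IsClosed B)
    (hne : B.Nonempty) : ∃ p ∈ B, (𝓝[B] p).IsBoundedUnder (· ≤ ·) K := by
  have := hne.to_subtype
  have := hB.completeSpace_coe
  obtain ⟨p, hp⟩ := exists_isBoundedUnder_nhds_of_lowerSemicontinuous
    (hK.comp (continuous_subtype_val (p := (· ∈ B))))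
  refine ⟨p, p.2, ?_⟩
  rwa [IsBoundedUnder, ← map_nhds_subtype_val, map_map]

lemma isClosed_setOf_not_isBoundedUnder_nhds {X α : Type*} [TopologicalSpace X] [LE α]
    (K : X → α) : IsClosed {x | ¬(𝓝 x).IsBoundedUnder (· ≤ ·) K} := by
  refine isOpen_compl_iff.1 (isOpen_iff_mem_nhds.2 fun x hx => ?_)
  obtain ⟨b, hb⟩ := not_not.1 hx
  filter_upwards [eventually_eventually_nhds.2 hb] with y hy using not_not.2 ⟨b, hy⟩

variable {K G : ℝ → ℝ}

lemma le_two_mul_of_local_estimate (hK₀ : ∀ t, 0 ≤ K t)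
    (h : ∀ s t, |G t - G s| ≤ 1 / 2 → BddAbove (K '' uIcc s t) → K t * (1 - |G t - G s|) ≤ K s)
    {s t : ℝ} (hG : |G t - G s| ≤ 1 / 2) (hK : BddAbove (K '' uIcc s t)) : K t ≤ 2 * K s := by
  nlinarith [h s t hG hK, hK₀ t]

lemma le_two_mul_of_isBoundedUnder_nhds (hK₀ : ∀ t, 0 ≤ K t)
    (h : ∀ s t, |G t - G s| ≤ 1 / 2 → BddAbove (K '' uIcc s t) → K t * (1 - |G t - G s|) ≤ K s)
    {a t : ℝ} (hG : ∀ u ∈ uIcc a t, ∀ u' ∈ uIcc a t, |G u - G u'| ≤ 1 / 2)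
    (hK : ∀ u ∈ uIcc a t, u ≠ a → (𝓝 u).IsBoundedUnder (· ≤ ·) K) : K t ≤ 2 * K a := by
  have backward : ∀ u ∈ uIcc a t, u ≠ a → K u ≤ 2 * K t := by
    intro u hu hua
    have hsub : uIcc t u ⊆ uIcc a t := uIcc_subset_uIcc right_mem_uIcc hu
    refine le_two_mul_of_local_estimate hK₀ h (hG u hu t right_mem_uIcc)
      (bddAbove_image_of_isBoundedUnder_nhdsWithin isCompact_uIcc fun x hx => ?_)
    refine (hK x (hsub hx) ?_).mono nhdsWithin_le_nhds
    rintro rfl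
    rw [uIcc_comm] at hx
    exact hua (eq_of_mem_uIcc_of_mem_uIcc hu hx)
  refine le_two_mul_of_local_estimate hK₀ h (hG t right_mem_uIcc a left_mem_uIcc)
    ⟨max (K a) (2 * K t), forall_mem_image.2 fun u hu => ?_⟩
  rcases eq_or_ne u a with rfl | hua
  · exact le_max_left _ _
  · exact (backward u hu hua).trans (le_max_right _ _)

lemma exists_nearest_mem_uIcc {B : Set ℝ} (hB : IsClosed B) {p : ℝ} (hp : p ∈ B) (t : ℝ) :
    ∃ a ∈ B ∩ uIcc p t, ∀ u ∈ uIcc a t, u ≠ a → u ∉ B := by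
  obtain ⟨a, ha, hmin⟩ := (isCompact_uIcc.inter_left hB).exists_isMinOn
    (f := fun x => |x - t|) ⟨p, hp, left_mem_uIcc⟩ (by fun_prop)
  refine ⟨a, ha, fun u hu hua huB => hua ?_⟩
  have hle : |a - t| ≤ |u - t| := hmin ⟨huB, uIcc_subset_uIcc ha.2 right_mem_uIcc hu⟩
  rcases le_total a t with hat | hat
  · rw [uIcc_of_le hat, mem_Icc] at hu
    rw [abs_of_nonpos (by linarith), abs_of_nonpos (by linarith)] at hle
    linarith
  · rw [uIcc_of_ge hat, mem_Icc] at hu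
    rw [abs_of_nonneg (by linarith), abs_of_nonneg (by linarith)] at hle
    linarith

/- By Baire's theorem `K` is bounded near some point of the closed set `B` of its points of local
unboundedness, relative to `B`; the estimate `h` spreads this bound over the adjacent components of
`Bᶜ`, so `B` is empty. -/
lemma isBoundedUnder_nhds_of_local_estimate (hlsc : LowerSemicontinuous K) (hK₀ : ∀ t, 0 ≤ K t)
    (hG : Continuous G)
    (h : ∀ s t, |G t - G s| ≤ 1 / 2 → BddAbove (K '' uIcc s t) → K t * (1 - |G t - G s|) ≤ K s)
    (t : ℝ) : (𝓝 t).IsBoundedUnder (· ≤ ·) K := by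
  set B : Set ℝ := {x | ¬(𝓝 x).IsBoundedUnder (· ≤ ·) K}
  have hB : IsClosed B := isClosed_setOf_not_isBoundedUnder_nhds K
  by_contra ht
  obtain ⟨p, hpB, M, hM⟩ := exists_isBoundedUnder_nhdsWithin_of_lowerSemicontinuous hlsc hB
    ⟨t, ht⟩
  have hosc : ∀ᶠ u in 𝓝 p, |G u - G p| < 1 / 4 := by
    simpa [Real.dist_eq] using hG.continuousAt.eventually (ball_mem_nhds (G p) (by norm_num))
  obtain ⟨ε, hε, hball⟩ := Metric.eventually_nhds_iff_ball.1
    (hosc.and (eventually_nhdsWithin_iff.1 (eventually_map.1 hM)))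
  refine hpB ⟨2 * M, eventually_map.2 (Metric.eventually_nhds_iff_ball.2 ⟨ε, hε, fun x hx => ?_⟩)⟩
  obtain ⟨a, ⟨haB, ha⟩, hnear⟩ := exists_nearest_mem_uIcc hB hpB x
  have hsub : uIcc p x ⊆ ball p ε :=
    (convex_ball p ε).ordConnected.uIcc_subset (mem_ball_self hε) hx
  have hsub' : uIcc a x ⊆ ball p ε := (uIcc_subset_uIcc ha right_mem_uIcc).trans hsub
  have hKx : K x ≤ 2 * K a := by
    refine le_two_mul_of_isBoundedUnder_nhds hK₀ h (fun u hu u' hu' => ?_)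
      fun u hu hua => not_not.1 (hnear u hu hua)
    have := (hball u (hsub' hu)).1
    have := (hball u' (hsub' hu')).1
    rw [abs_lt] at *
    exact abs_le.2 ⟨by linarith, by linarith⟩
  linarith [(hball a (hsub ha)).2 haB]

lemma one_le_one_sub_mul_exp {δ : ℝ} (h₀ : 0 ≤ δ) (h₁ : δ ≤ 1 / 2) :
    1 ≤ (1 - δ) * Real.exp (2 * δ) := by
  nlinarith [Real.add_one_le_exp (2 * δ)]

lemma exists_abs_sub_eq_half {s t : ℝ} (hG : Continuous G) :
    ∃ m, |G m - G s| = |G t - G s| / 2 ∧ |G t - G m| = |G t - G s| / 2 := by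
  obtain ⟨m, -, hm⟩ : midpoint ℝ (G s) (G t) ∈ G '' uIcc s t :=
    intermediate_value_uIcc hG.continuousOn
      (segment_eq_uIcc (G s) (G t) ▸ midpoint_mem_segment (G s) (G t))
  refine ⟨m, ?_, ?_⟩ <;> rw [hm, ← Real.dist_eq, ← Real.dist_eq]
  · rw [dist_midpoint_left, dist_comm (G t), Real.norm_ofNat, inv_mul_eq_div]
  · rw [dist_right_midpoint, dist_comm (G t), Real.norm_ofNat, inv_mul_eq_div]

theorem le_mul_exp_of_local_estimate (hlsc : LowerSemicontinuous K) (hK₀ : ∀ t, 0 ≤ K t)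
    (hG : Continuous G)
    (h : ∀ s t, |G t - G s| ≤ 1 / 2 → BddAbove (K '' uIcc s t) → K t * (1 - |G t - G s|) ≤ K s)
    (s t : ℝ) : K t ≤ K s * Real.exp (2 * |G t - G s|) := by
  have dyadic : ∀ (n : ℕ) (s t : ℝ), |G t - G s| ≤ 1 / 2 * 2 ^ n →
      K t ≤ K s * Real.exp (2 * |G t - G s|) := by
    intro n
    induction n with
    | zero =>
      intro s t hst
      rw [pow_zero, mul_one] at hst
      have hbdd : BddAbove (K '' uIcc s t) :=
        bddAbove_image_of_isBoundedUnder_nhdsWithin isCompact_uIcc fun x _ =>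
          (isBoundedUnder_nhds_of_local_estimate hlsc hK₀ hG h x).mono nhdsWithin_le_nhds
      calc K t ≤ K t * ((1 - |G t - G s|) * Real.exp (2 * |G t - G s|)) :=
            le_mul_of_one_le_right (hK₀ t) (one_le_one_sub_mul_exp (abs_nonneg _) hst)
        _ = K t * (1 - |G t - G s|) * Real.exp (2 * |G t - G s|) := by ring
        _ ≤ K s * Real.exp (2 * |G t - G s|) := by gcongr; exact h s t hst hbdd
    | succ n ih =>
      intro s t hst
      obtain ⟨m, hleft, hright⟩ := exists_abs_sub_eq_half (s := s) (t := t) hG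
      have hhalf : |G t - G s| / 2 ≤ 1 / 2 * 2 ^ n := by rw [pow_succ] at hst; linarith
      calc K t ≤ K m * Real.exp (2 * |G t - G m|) := ih m t (hright.trans_le hhalf)
        _ ≤ K s * Real.exp (2 * |G m - G s|) * Real.exp (2 * |G t - G m|) := by
            gcongr
            exact ih s m (hleft.trans_le hhalf)
        _ = K s * Real.exp (2 * |G t - G s|) := by
            rw [mul_assoc, ← Real.exp_add, hleft, hright]
            ring_nf
  obtain ⟨n, hn⟩ := pow_unbounded_of_one_lt (2 * |G t - G s|) one_lt_two
  exact dyadic n s t (by linarith)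

theorem le_mul_exp_of_local_estimate_Icc {a b : ℝ} (hlsc : LowerSemicontinuousOn K (Icc a b))
    (hK₀ : ∀ t ∈ Icc a b, 0 ≤ K t) (hG : ContinuousOn G (Icc a b))
    (h : ∀ s ∈ Icc a b, ∀ t ∈ Icc a b, |G t - G s| ≤ 1 / 2 → BddAbove (K '' uIcc s t) →
      K t * (1 - |G t - G s|) ≤ K s) {s t : ℝ} (hs : s ∈ Icc a b) (ht : t ∈ Icc a b) :
    K t ≤ K s * Real.exp (2 * |G t - G s|) := by
  have hab : a ≤ b := hs.1.trans hs.2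
  let p : ℝ → ℝ := fun x => projIcc a b hab x
  have hp : ∀ x, p x ∈ Icc a b := fun x => (projIcc a b hab x).2
  have hp_cont : Continuous p := continuous_subtype_val.comp continuous_projIcc
  have hp_eq : ∀ x ∈ Icc a b, p x = x := fun x hx => by simp [p, projIcc_of_mem hab hx]
  have hlsc' : LowerSemicontinuous (K ∘ p) :=
    lowerSemicontinuousOn_univ_iff.1 (hlsc.comp hp_cont.continuousOn fun x _ => hp x)
  have key := le_mul_exp_of_local_estimate hlsc' (fun x => hK₀ _ (hp x))
    (hG.comp_continuous hp_cont hp) (fun u v huv hbdd => ?_) s t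
  · simpa only [Function.comp_apply, hp_eq s hs, hp_eq t ht] using key
  · refine h _ (hp u) _ (hp v) huv (hbdd.mono ?_)
    rw [image_comp]
    exact image_mono (intermediate_value_uIcc hp_cont.continuousOn)

end SemicontinuousGronwall

section RelativeGrowth

variable {ι E F : Type*} [NormedAddCommGroup E] [NormedAddCommGroup F] {γ : ℝ}

/-- The constants `c ≥ 0` with `‖z i‖ ≤ c * ‖y i‖ ^ γ` for all `i`. If `y` and `z` collect the
increments of the argument and of the values of a function, the least such constant is its
`γ`-Hölder seminorm. -/
def rpowBounds (γ : ℝ) (y : ι → E) (z : ι → F) : Set ℝ :=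
  {c | 0 ≤ c ∧ ∀ i, ‖z i‖ ≤ c * ‖y i‖ ^ γ}

lemma mem_rpowBounds_iff_le {y : ι → E} {z : ι → F} {a c : ℝ}
    (ha : IsLeast (rpowBounds γ y z) a) : c ∈ rpowBounds γ y z ↔ a ≤ c := by
  refine ⟨fun hc => ha.2 hc, fun hac => ⟨ha.1.1.trans hac, fun i => (ha.1.2 i).trans ?_⟩⟩
  gcongr

lemma lowerSemicontinuous_of_isLeast_rpowBounds {X : Type*} [TopologicalSpace X] (hγ : 0 ≤ γ)
    {y : X → ι → E} {z : X → ι → F} {K : X → ℝ} (hy : ∀ i, Continuous (y · i))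
    (hz : ∀ i, Continuous (z · i)) (hK : ∀ x, IsLeast (rpowBounds γ (y x) (z x)) (K x)) :
    LowerSemicontinuous K := by
  refine lowerSemicontinuous_iff_isClosed_preimage.2 fun c => ?_
  have hpre : K ⁻¹' Iic c = {_x | 0 ≤ c} ∩ ⋂ i, {x | ‖z x i‖ ≤ c * ‖y x i‖ ^ γ} := by
    ext x
    simpa [rpowBounds] using (mem_rpowBounds_iff_le (hK x) (c := c)).symm
  rw [hpre]
  exact isClosed_const.inter (isClosed_iInter fun i => isClosed_le (hz i).norm
    (((hy i).norm.rpow_const fun _ => Or.inr hγ).const_mul c))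

variable [NormedSpace ℝ E] [NormedSpace ℝ F] {w : ℝ → ℝ} {s t : ℝ}

lemma norm_sub_le_abs_integral_of_norm_deriv_le {z z' : ℝ → F} {b : ℝ → ℝ}
    (hz : ∀ u ∈ uIcc s t, HasDerivAt z (z' u) u) (hb : IntervalIntegrable b volume s t)
    (hz' : ∀ u ∈ uIcc s t, ‖z' u‖ ≤ b u) : ‖z t - z s‖ ≤ |∫ u in s..t, b u| := by
  wlog hst : s ≤ t generalizing s t
  · rw [norm_sub_rev, intervalIntegral.integral_symm, abs_neg]
    rw [uIcc_comm] at hz hz'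
    exact this hz hb.symm hz' (le_of_not_ge hst)
  rw [uIcc_of_le hst] at hz hz'
  refine (norm_sub_le_integral_of_norm_deriv_le_of_le hst (HasDerivAt.continuousOn hz)
    (fun u hu => (hz u (Ioo_subset_Icc_self hu)).differentiableAt.differentiableWithinAt)
    (.of_forall fun u hu => ?_) hb).trans (le_abs_self _)
  have hu' := Ioo_subset_Icc_self hu
  exact (hz u hu').deriv ▸ hz' u hu'

lemma norm_sub_le_abs_integral_mul {z z' : ℝ → F} {c : ℝ}
    (hz : ∀ u ∈ uIcc s t, HasDerivAt z (z' u) u) (hw : IntervalIntegrable w volume s t)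
    (hw₀ : 0 ≤ w) (hc : 0 ≤ c) (hz' : ∀ u ∈ uIcc s t, ‖z' u‖ ≤ w u * c) {u v : ℝ}
    (hu : u ∈ uIcc s t) (hv : v ∈ uIcc s t) : ‖z v - z u‖ ≤ |∫ x in s..t, w x| * c := by
  have hsub : uIcc u v ⊆ uIcc s t := uIcc_subset_uIcc hu hv
  calc ‖z v - z u‖ ≤ |∫ x in u..v, w x * c| :=
        norm_sub_le_abs_integral_of_norm_deriv_le (fun x hx => hz x (hsub hx))
          ((hw.mono_set hsub).mul_const c) fun x hx => hz' x (hsub hx)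
    _ = |∫ x in u..v, w x| * c := by
        rw [intervalIntegral.integral_mul_const, abs_mul, abs_of_nonneg hc]
    _ ≤ |∫ x in s..t, w x| * c := by
        gcongr ?_ * c
        exact intervalIntegral.abs_integral_mono_interval
          (uIoc_subset_uIoc_of_uIcc_subset_uIcc hsub) (ae_of_all _ hw₀) hw

lemma norm_mul_one_sub_abs_integral_le {y y' : ℝ → E}
    (hy : ∀ u ∈ uIcc s t, HasDerivAt y (y' u) u) (hw : IntervalIntegrable w volume s t)
    (hw₀ : 0 ≤ w) (hy' : ∀ u ∈ uIcc s t, ‖y' u‖ ≤ w u * ‖y u‖) (hδ : |∫ x in s..t, w x| ≤ 1)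
    {u v : ℝ} (hu : u ∈ uIcc s t) (hv : v ∈ uIcc s t) :
    ‖y u‖ * (1 - |∫ x in s..t, w x|) ≤ ‖y v‖ := by
  obtain ⟨m, hm, hmax⟩ := isCompact_uIcc.exists_isMaxOn ⟨u, hu⟩ (HasDerivAt.continuousOn hy).norm
  have hmax' : ∀ x ∈ uIcc s t, ‖y x‖ ≤ ‖y m‖ := fun x hx => hmax hx
  have hdiff : ‖y m - y v‖ ≤ |∫ x in s..t, w x| * ‖y m‖ :=
    norm_sub_le_abs_integral_mul hy hw hw₀ (norm_nonneg _)
      (fun x hx => (hy' x hx).trans (mul_le_mul_of_nonneg_left (hmax' x hx) (hw₀ x))) hv hm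
  calc ‖y u‖ * (1 - |∫ x in s..t, w x|) ≤ ‖y m‖ * (1 - |∫ x in s..t, w x|) :=
        mul_le_mul_of_nonneg_right (hmax' u hu) (sub_nonneg.2 hδ)
    _ ≤ ‖y v‖ := by linarith [norm_le_norm_add_norm_sub' (y m) (y v)]

lemma norm_mul_one_sub_abs_integral_le_rpow {y y' : ℝ → E} {z z' : ℝ → F} {c M : ℝ} (hγ : 0 ≤ γ)
    (hγ₁ : γ ≤ 1) (hy : ∀ u ∈ uIcc s t, HasDerivAt y (y' u) u)
    (hz : ∀ u ∈ uIcc s t, HasDerivAt z (z' u) u) (hw : IntervalIntegrable w volume s t)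
    (hw₀ : 0 ≤ w) (hδ : |∫ x in s..t, w x| < 1) (hc : 0 ≤ c) (hM : 0 ≤ M)
    (hy' : ∀ u ∈ uIcc s t, ‖y' u‖ ≤ w u * ‖y u‖)
    (hz' : ∀ u ∈ uIcc s t, ‖z' u‖ ≤ w u * (M * ‖y u‖ ^ γ)) (hs : ‖z s‖ ≤ c * ‖y s‖ ^ γ) :
    ‖z t‖ ≤ (c + |∫ x in s..t, w x| * M) / (1 - |∫ x in s..t, w x|) * ‖y t‖ ^ γ := by
  set δ := |∫ x in s..t, w x|
  have hδ₀ : 0 ≤ δ := abs_nonneg _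
  have hδ₁ : 0 < 1 - δ := sub_pos.2 hδ
  set R := ‖y t‖ / (1 - δ)
  have hyR : ∀ u ∈ uIcc s t, ‖y u‖ ≤ R := fun u hu => (le_div_iff₀ hδ₁).2
    (norm_mul_one_sub_abs_integral_le hy hw hw₀ hy' hδ.le hu right_mem_uIcc)
  have hyR' : ∀ u ∈ uIcc s t, ‖y u‖ ^ γ ≤ R ^ γ := fun u hu =>
    Real.rpow_le_rpow (norm_nonneg _) (hyR u hu) hγ
  have hdiff : ‖z t - z s‖ ≤ δ * (M * R ^ γ) :=
    norm_sub_le_abs_integral_mul hz hw hw₀ (by positivity) (fun u hu => (hz' u hu).trans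
      (mul_le_mul_of_nonneg_left (mul_le_mul_of_nonneg_left (hyR' u hu) hM) (hw₀ u)))
      left_mem_uIcc right_mem_uIcc
  have hRγ : R ^ γ ≤ ‖y t‖ ^ γ / (1 - δ) := by
    rw [Real.div_rpow (norm_nonneg _) hδ₁.le]
    gcongr
    exact Real.self_le_rpow_of_le_one hδ₁.le (by linarith) hγ₁
  calc ‖z t‖ ≤ ‖z s‖ + ‖z t - z s‖ := norm_le_norm_add_norm_sub' _ _
    _ ≤ c * R ^ γ + δ * (M * R ^ γ) :=
        add_le_add (hs.trans (mul_le_mul_of_nonneg_left (hyR' s left_mem_uIcc) hc)) hdiff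
    _ = (c + δ * M) * R ^ γ := by ring
    _ ≤ (c + δ * M) * (‖y t‖ ^ γ / (1 - δ)) := by gcongr
    _ = (c + δ * M) / (1 - δ) * ‖y t‖ ^ γ := by ring

variable {y y' : ℝ → ι → E} {z z' : ℝ → ι → F} {K : ℝ → ℝ}

lemma mul_one_sub_two_mul_abs_integral_le (hγ : 0 ≤ γ) (hγ₁ : γ ≤ 1)
    (hy : ∀ u ∈ uIcc s t, ∀ i, HasDerivAt (y · i) (y' u i) u)
    (hz : ∀ u ∈ uIcc s t, ∀ i, HasDerivAt (z · i) (z' u i) u)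
    (hw : IntervalIntegrable w volume s t) (hw₀ : 0 ≤ w) (hδ : |∫ x in s..t, w x| < 1)
    (hK : ∀ u ∈ uIcc s t, IsLeast (rpowBounds γ (y u) (z u)) (K u))
    (hbdd : BddAbove (K '' uIcc s t))
    (hy' : ∀ u ∈ uIcc s t, ∀ i, ‖y' u i‖ ≤ w u * ‖y u i‖)
    (hz' : ∀ u ∈ uIcc s t, ∀ i, ‖z' u i‖ ≤ w u * (K u * ‖y u i‖ ^ γ)) :
    K t * (1 - 2 * |∫ x in s..t, w x|) ≤ K s := by
  set δ := |∫ x in s..t, w x|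
  set M := sSup (K '' uIcc s t)
  have hKM : ∀ u ∈ uIcc s t, K u ≤ M := fun u hu => le_csSup hbdd (mem_image_of_mem K hu)
  have hKs : 0 ≤ K s := (hK s left_mem_uIcc).1.1
  have hM : 0 ≤ M := hKs.trans (hKM s left_mem_uIcc)
  have hδ₁ : 0 < 1 - δ := sub_pos.2 hδ
  have hstep : ∀ u ∈ uIcc s t, K u ≤ (K s + δ * M) / (1 - δ) := by
    intro u hu
    have hsub : uIcc s u ⊆ uIcc s t := uIcc_subset_uIcc left_mem_uIcc hu
    have hδu : |∫ x in s..u, w x| ≤ δ := intervalIntegral.abs_integral_mono_interval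
      (uIoc_subset_uIoc_of_uIcc_subset_uIcc hsub) (ae_of_all _ hw₀) hw
    have hmem : (K s + |∫ x in s..u, w x| * M) / (1 - |∫ x in s..u, w x|)
        ∈ rpowBounds γ (y u) (z u) := by
      refine ⟨by have := hδu.trans_lt hδ; bound, fun i => norm_mul_one_sub_abs_integral_le_rpow hγ
        hγ₁ (fun x hx => hy x (hsub hx) i) (fun x hx => hz x (hsub hx) i) (hw.mono_set hsub) hw₀
        (hδu.trans_lt hδ) hKs hM (fun x hx => hy' x (hsub hx) i)
        (fun x hx => (hz' x (hsub hx) i).trans ?_) ((hK s left_mem_uIcc).1.2 i)⟩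
      gcongr
      exacts [hw₀ x, hKM x (hsub hx)]
    refine ((hK u hu).2 hmem).trans ?_
    gcongr
  have hMstep : M ≤ (K s + δ * M) / (1 - δ) :=
    csSup_le (nonempty_uIcc.image K) (forall_mem_image.2 hstep)
  rw [le_div_iff₀ hδ₁] at hMstep
  have hKt := hKM t right_mem_uIcc
  have hKt₀ : 0 ≤ K t := (hK t right_mem_uIcc).1.1
  rcases le_total (1 - 2 * δ) 0 with hneg | hpos
  · exact (mul_nonpos_of_nonneg_of_nonpos hKt₀ hneg).trans hKs
  · linarith [mul_le_mul_of_nonneg_right hKt hpos]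

theorem le_mul_exp_integral_of_isLeast_rpowBounds (hγ : 0 ≤ γ) (hγ₁ : γ ≤ 1) {T : ℝ} (hT : 0 ≤ T)
    (hy : ∀ u ∈ Icc 0 T, ∀ i, HasDerivAt (y · i) (y' u i) u)
    (hz : ∀ u ∈ Icc 0 T, ∀ i, HasDerivAt (z · i) (z' u i) u)
    (hw : IntervalIntegrable w volume 0 T) (hw₀ : 0 ≤ w)
    (hK : ∀ u ∈ Icc 0 T, IsLeast (rpowBounds γ (y u) (z u)) (K u))
    (hy' : ∀ u ∈ Icc 0 T, ∀ i, ‖y' u i‖ ≤ w u * ‖y u i‖)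
    (hz' : ∀ u ∈ Icc 0 T, ∀ i, ‖z' u i‖ ≤ w u * (K u * ‖y u i‖ ^ γ)) {t : ℝ}
    (ht : t ∈ Icc 0 T) : K t ≤ K 0 * Real.exp (4 * ∫ u in 0..t, w u) := by
  have h0 : (0 : ℝ) ∈ Icc 0 T := left_mem_Icc.2 hT
  have hint : ∀ u ∈ Icc 0 T, ∀ v ∈ Icc 0 T, IntervalIntegrable w volume u v := fun u hu v hv =>
    hw.mono_set (uIcc_subset_uIcc (Icc_subset_uIcc hu) (Icc_subset_uIcc hv))
  let G : ℝ → ℝ := fun u => 2 * ∫ x in 0..u, w x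
  have hG : ∀ u ∈ Icc 0 T, ∀ v ∈ Icc 0 T, |G v - G u| = 2 * |∫ x in u..v, w x| :=
    fun u hu v hv => by
      rw [← mul_sub, intervalIntegral.integral_interval_sub_left (hint _ h0 _ hv) (hint _ h0 _ hu),
        abs_mul, abs_two]
  have hG_cont : ContinuousOn G (Icc 0 T) := uIcc_of_le hT ▸
    continuousOn_const.mul (intervalIntegral.continuousOn_primitive_interval' hw left_mem_uIcc)
  have hlsc : LowerSemicontinuousOn K (Icc 0 T) := lowerSemicontinuous_restrict_iff.1 <|
    lowerSemicontinuous_of_isLeast_rpowBounds hγ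
      (fun i => (HasDerivAt.continuousOn fun u hu => hy u hu i).domRestrict)
      (fun i => (HasDerivAt.continuousOn fun u hu => hz u hu i).domRestrict) fun x => hK x x.2
  have key := le_mul_exp_of_local_estimate_Icc hlsc (fun u hu => (hK u hu).1.1) hG_cont
    (fun u hu v hv huv hbdd => ?_) h0 ht
  · rwa [hG 0 h0 t ht, ← mul_assoc, show (2 * 2 : ℝ) = 4 by norm_num,
      abs_of_nonneg (intervalIntegral.integral_nonneg ht.1 fun x _ => hw₀ x)] at key
  · have hsub : uIcc u v ⊆ Icc 0 T := ordConnected_Icc.uIcc_subset hu hv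
    rw [hG u hu v hv] at huv ⊢
    exact mul_one_sub_two_mul_abs_integral_le hγ hγ₁ (fun x hx => hy x (hsub hx))
      (fun x hx => hz x (hsub hx)) (hint u hu v hv) hw₀ (by linarith)
      (fun x hx => hK x (hsub hx)) hbdd (fun x hx => hy' x (hsub hx))
      fun x hx => hz' x (hsub hx)

end RelativeGrowth

section PatchFlow

open Module
open scoped NNReal

variable {E F : Type*} [NormedAddCommGroup E] {γ : ℝ≥0}

lemma nonneg_of_norm_sub_le_rpow [Nontrivial E] [NormedAddCommGroup F] {f : E → F} {γ H : ℝ}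
    (hf : ∀ x y, ‖f x - f y‖ ≤ H * ‖x - y‖ ^ γ) : 0 ≤ H := by
  obtain ⟨x, y, hxy⟩ := exists_pair_ne E
  have : 0 < ‖x - y‖ := norm_sub_pos_iff.2 hxy
  exact nonneg_of_mul_nonneg_left ((norm_nonneg _).trans (hf x y)) (by positivity)

lemma holderWith_iff_norm_sub_le [NormedAddCommGroup F] {f : E → F} {H : ℝ≥0} :
    HolderWith H γ f ↔ ∀ x y, ‖f x - f y‖ ≤ H * ‖x - y‖ ^ (γ : ℝ) := by
  refine forall₂_congr fun x y => ?_
  rw [← dist_eq_norm, ← dist_eq_norm, edist_nndist, edist_nndist,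
    ← ENNReal.coe_rpow_of_nonneg _ γ.coe_nonneg, ← ENNReal.coe_mul, ENNReal.coe_le_coe,
    ← NNReal.coe_le_coe]
  rfl

lemma isLeast_rpowBounds_nnHolderNorm [NormedAddCommGroup F] {f : E → F} (hf : MemHolder γ f)
    {ι : Type*} {x : ι → E} (hx : x.Surjective) :
    IsLeast (rpowBounds (γ : ℝ) (fun p : ι × ι => x p.1 - x p.2)
      fun p => f (x p.1) - f (x p.2)) (nnHolderNorm γ f) := by
  refine ⟨⟨NNReal.coe_nonneg _, fun p => holderWith_iff_norm_sub_le.1 hf.holderWith _ _⟩,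
    fun c ⟨hc, hbound⟩ => ?_⟩
  lift c to ℝ≥0 using hc
  refine NNReal.coe_le_coe.2 (holderWith_iff_norm_sub_le.2 fun a b => ?_).nnholderNorm_le
  obtain ⟨i, rfl⟩ := hx a
  obtain ⟨j, rfl⟩ := hx b
  exact hbound (i, j)

theorem IsPotentialKernel.nnHolderNorm_le_mul_exp [NormedSpace ℝ E] [FiniteDimensional ℝ E]
    [Nontrivial E] [MeasurableSpace E] [BorelSpace E] {μ : Measure E} [μ.IsAddHaarMeasure]
    {k : E → E} {A : ℝ} (hk : IsPotentialKernel k A) (hγ : 0 < γ) (hγ₁ : γ < 1) {T : ℝ}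
    {D : ℝ → Set E} (hD : ∀ t ∈ Icc 0 T, MeasurableSet (D t))
    (hDb : ∀ t ∈ Icc 0 T, Bornology.IsBounded (D t)) {ι : Type*} {X : ι → ℝ → E}
    (hX : ∀ t ∈ Icc 0 T, Function.Surjective (X · t))
    (hX' : ∀ α, ∀ t ∈ Icc 0 T, HasDerivAt (X α) (-patchPotential μ k (D t) (X α t)) t)
    {g : ℝ → ℝ≥0} (hg : IntervalIntegrable (fun t => (g t : ℝ)) volume 0 T)
    (hL : ∀ t ∈ Icc 0 T, LipschitzWith (g t) (patchPotential μ k (D t))) {f : ℝ → E → E}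
    (hf : ∀ t ∈ Icc 0 T, MemHolder γ (f t))
    (hf' : ∀ α, ∀ t ∈ Icc 0 T,
      HasDerivAt (fun s => f s (X α s)) (patchCommutator μ k (D t) (f t) (X α t)) t)
    {C : ℝ} (hC : 1 ≤ C) (hAC : A * sphereMass μ * (5 / γ + 2 / (1 - γ) + 6) ≤ C) {t : ℝ}
    (ht : t ∈ Icc 0 T) :
    (nnHolderNorm γ (f t) : ℝ)
      ≤ nnHolderNorm γ (f 0) * Real.exp (4 * C * ∫ s in 0..t, (1 + g s : ℝ)) := by
  have hgC : ∀ u, g u ≤ C * (1 + g u) := fun u => by nlinarith [(g u).coe_nonneg]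
  have hrate : ∀ u, A * sphereMass μ * (5 / γ + 2 / (1 - γ) + 6) + g u ≤ C * (1 + g u) :=
    fun u => by nlinarith [(g u).coe_nonneg]
  rw [mul_assoc, ← intervalIntegral.integral_const_mul]
  refine le_mul_exp_integral_of_isLeast_rpowBounds γ.coe_nonneg (by exact_mod_cast hγ₁.le)
    (ht.1.trans ht.2) (fun u hu p => (hX' p.1 u hu).sub (hX' p.2 u hu))
    (fun u hu p => (hf' p.1 u hu).sub (hf' p.2 u hu))
    ((intervalIntegrable_const.add hg).const_mul C) (fun u => (g u).coe_nonneg.trans (hgC u))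
    (fun u hu => isLeast_rpowBounds_nnHolderNorm (hf u hu) (hX u hu)) (fun u hu p => ?_)
    (fun u hu p => ?_) ht
  · rw [neg_sub_neg, norm_sub_rev]
    exact ((hL u hu).norm_sub_le _ _).trans (mul_le_mul_of_nonneg_right (hgC u) (norm_nonneg _))
  · rw [← mul_assoc]
    refine (hk.norm_patchCommutator_sub_le (hD u hu) (hDb u hu) (hL u hu) hγ hγ₁
      (hf u hu).holderWith _ _).trans ?_
    gcongr
    exact hrate u

lemma patchCommutator_gradN {d : ℕ} (μ : Measure (EuclideanSpace ℝ (Fin d)))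
    (D : Set (EuclideanSpace ℝ (Fin d)))
    (f : EuclideanSpace ℝ (Fin d) → EuclideanSpace ℝ (Fin d)) (x : EuclideanSpace ℝ (Fin d)) :
    patchCommutator μ (gradN d) D f x = ∫ y in D, hessN d (x - y) (f x - f y) ∂μ := by
  refine integral_congr_ae (ae_of_all _ fun y => ?_)
  rcases eq_or_ne x y with rfl | hxy
  · simp [hessN]
  · exact fderiv_gradN (sub_ne_zero.2 hxy) _

theorem apriori_holder_bound_general (d : ℕ) (hd : 1 ≤ d) (γ : ℝ) (hγ : γ ∈ Ioo 0 1) :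
    ∃ C > (0 : ℝ), ∀ (T : ℝ) (D : ℝ → Set (EuclideanSpace ℝ (Fin d))),
      (∀ t ∈ Icc 0 T, MeasurableSet (D t)) →
      (∀ t ∈ Icc 0 T, Bornology.IsBounded (D t)) →
      ∀ X : EuclideanSpace ℝ (Fin d) → ℝ → EuclideanSpace ℝ (Fin d),
      (∀ t ∈ Icc 0 T, Function.Surjective (X · t)) →
      ∀ v : EuclideanSpace ℝ (Fin d) → ℝ → EuclideanSpace ℝ (Fin d),
      (∀ x t, v x t = -∫ y in D t, gradN d (x - y)) →
      (∀ α, ∀ t ∈ Icc 0 T, HasDerivAt (fun s => X α s) (v (X α t) t) t) →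
      ∀ g : ℝ → ℝ, (∀ t, 0 ≤ g t) → IntervalIntegrable g volume 0 T →
      (∀ t ∈ Icc 0 T, ∀ x y, ‖v x t - v y t‖ ≤ g t * ‖x - y‖) →
      ∀ f : ℝ → EuclideanSpace ℝ (Fin d) → EuclideanSpace ℝ (Fin d),
      (∀ t ∈ Icc 0 T, ∃ H, ∀ x y, ‖f t x - f t y‖ ≤ H * ‖x - y‖ ^ γ) →
      (∀ α, ∀ t ∈ Icc 0 T, HasDerivAt (fun s => f s (X α s))
        (∫ y in D t, hessN d (X α t - y) (f t (X α t) - f t y)) t) →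
      ∀ H₀ : ℝ, (∀ x y, ‖f 0 x - f 0 y‖ ≤ H₀ * ‖x - y‖ ^ γ) →
      ∀ t ∈ Icc 0 T, ∀ x y, ‖f t x - f t y‖
        ≤ H₀ * Real.exp (C * ∫ s in 0..t, (1 + g s)) * ‖x - y‖ ^ γ := by
  have : NeZero d := ⟨by omega⟩
  obtain ⟨A, hk⟩ := exists_isPotentialKernel_gradN d
  lift γ to ℝ≥0 using hγ.1.le
  have hγ₀ : 0 < γ := by exact_mod_cast hγ.1
  have hγ₁ : γ < 1 := by exact_mod_cast hγ.2
  let C : ℝ := max 1 (A * sphereMass (volume : Measure (EuclideanSpace ℝ (Fin d)))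
    * (5 / γ + 2 / (1 - γ) + 6))
  have hC : 1 ≤ C := le_max_left _ _
  refine ⟨4 * C, by linarith, fun T D hD hDb X hX v hv hX' g hg₀ hg hL f hf hf' H₀ hH₀ t ht x y =>
    ?_⟩
  lift g to ℝ → ℝ≥0 using hg₀
  lift H₀ to ℝ≥0 using nonneg_of_norm_sub_le_rpow hH₀
  have hmem : ∀ u ∈ Icc 0 T, MemHolder γ (f u) := fun u hu => by
    obtain ⟨H, hH⟩ := hf u hu
    lift H to ℝ≥0 using nonneg_of_norm_sub_le_rpow hH
    exact ⟨H, holderWith_iff_norm_sub_le.2 hH⟩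
  have hvel : ∀ u, (v · u) = -patchPotential volume (gradN d) (D u) := fun u =>
    funext fun a => hv a u
  have hlip : ∀ u ∈ Icc 0 T, LipschitzWith (g u) (patchPotential volume (gradN d) (D u)) :=
    fun u hu => by
      rw [← lipschitzWith_neg_iff, ← hvel u]
      exact .of_dist_le_mul (by simpa only [dist_eq_norm] using hL u hu)
  have hexp := hk.nnHolderNorm_le_mul_exp hγ₀ hγ₁ hD hDb hX
    (fun α u hu => by simpa only [hv] using! hX' α u hu) hg hlip hmem
    (fun α u hu => (patchCommutator_gradN ..).symm ▸ hf' α u hu) hC (le_max_right _ _) ht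
  have hinit : (nnHolderNorm γ (f 0) : ℝ) ≤ H₀ :=
    NNReal.coe_le_coe.2 (holderWith_iff_norm_sub_le.2 hH₀).nnholderNorm_le
  calc ‖f t x - f t y‖ ≤ nnHolderNorm γ (f t) * ‖x - y‖ ^ (γ : ℝ) :=
        holderWith_iff_norm_sub_le.1 (hmem t ht).holderWith x y
    _ ≤ _ := by
        gcongr
        exact hexp.trans (by gcongr)

end PatchFlow

/-- A priori Hölder bound for the gradient of the transported defining function
(estimate (7.4)). -/
theorem apriori_holder_bound
    (d : ℕ) (hd : 2 ≤ d) (γ : ℝ) (hγ : γ ∈ Set.Ioo (0:ℝ) 1) :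
    ∃ C > (0:ℝ),
      ∀ (T : ℝ), 0 < T →
      ∀ D₀ : Set (EuclideanSpace ℝ (Fin d)), IsC1Domain d γ D₀ →
      ∀ X : EuclideanSpace ℝ (Fin d) → ℝ → EuclideanSpace ℝ (Fin d),
        (Continuous fun p : EuclideanSpace ℝ (Fin d) × ℝ => X p.1 p.2) →
        (∀ α, X α 0 = α) →
        (∀ t ∈ Set.Icc (0:ℝ) T,
          ∃ h : EuclideanSpace ℝ (Fin d) ≃ₜ EuclideanSpace ℝ (Fin d), ∀ α, h α = X α t) →
        (∀ t ∈ Set.Icc (0:ℝ) T, IsC1Domain d γ ((fun α => X α t) '' D₀)) →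
        (∀ t ∈ Set.Icc (0:ℝ) T,
          frontier ((fun α => X α t) '' D₀) = (fun α => X α t) '' frontier D₀) →
      ∀ v : EuclideanSpace ℝ (Fin d) → ℝ → EuclideanSpace ℝ (Fin d),
        (∀ x t, v x t = -(∫ y in (fun α => X α t) '' D₀, gradN d (x - y))) →
        (∀ α, ∀ t ∈ Set.Icc (0:ℝ) T, HasDerivAt (fun s => X α s) (v (X α t) t) t) →
      ∀ g : ℝ → ℝ, (∀ s, 0 ≤ g s) → IntervalIntegrable g volume 0 T →
        (∀ s ∈ Set.Icc (0:ℝ) T, ∀ x y : EuclideanSpace ℝ (Fin d),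
          ‖v x s - v y s‖ ≤ g s * ‖x - y‖) →
      ∀ Φ : EuclideanSpace ℝ (Fin d) → ℝ → ℝ,
        (Continuous fun p : EuclideanSpace ℝ (Fin d) × ℝ => Φ p.1 p.2) →
        (∀ t ∈ Set.Icc (0:ℝ) T,
          IsDefining d γ ((fun α => X α t) '' D₀) (fun z => Φ z t)) →
        (∀ α : EuclideanSpace ℝ (Fin d), ∀ t ∈ Set.Icc (0:ℝ) T,
          HasDerivAt (fun s => gradient (fun z => Φ z s) (X α s))
            (∫ y in (fun α => X α t) '' D₀,
              hessN d (X α t - y)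
                (gradient (fun z => Φ z t) (X α t) - gradient (fun z => Φ z t) y)) t) →
      ∀ H₀ : ℝ,
        (∀ x y, ‖gradient (fun z => Φ z 0) x - gradient (fun z => Φ z 0) y‖
          ≤ H₀ * ‖x - y‖ ^ γ) →
        ∀ t ∈ Set.Icc (0:ℝ) T, ∀ x y,
          ‖gradient (fun z => Φ z t) x - gradient (fun z => Φ z t) y‖
            ≤ H₀ * Real.exp (C * ∫ s in (0:ℝ)..t, (1 + g s)) * ‖x - y‖ ^ γ := by
  obtain ⟨C, hC, h⟩ := apriori_holder_bound_general d (by omega) γ hγ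
  refine ⟨C, hC, fun T _ D₀ _ X _ _ hXhom hXD _ v hv hXv g hg₀ hg hgL Φ _ hΦ hΦd => ?_⟩
  have hsurj : ∀ t ∈ Icc 0 T, Function.Surjective (X · t) := fun t ht => by
    obtain ⟨e, he⟩ := hXhom t ht
    exact funext he ▸ e.surjective
  exact h T (fun t => (X · t) '' D₀) (fun t ht => (hXD t ht).1.measurableSet)
    (fun t ht => (hXD t ht).2.1) X hsurj v hv hXv g hg₀ hg hgL (fun t => gradient (Φ · t))
    (fun t ht => (hΦ t ht).2.1) hΦd
end
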